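/- Assume the Extended Riemann Hypothesis. Let D : ℕ → ℕ and a : ℕ → ℕ be sequences with D_n ≥ 1, gcd(a_n, D_n) = 1 for all n, and D_n·(log n)^2/√n → 0 as n → ∞. Then for all sufficiently large n there exists a prime p with p ≡ a_n (mod D_n) and n/2 ≤ p ≤ n. -/

import Mathlib

/-- The Extended Riemann Hypothesis: every zero of every Dirichlet `L`-function
in the critical strip lies on the critical line. -/
def ExtendedRiemannHypothesis : Prop :=
  ∀ (N : ℕ) [NeZero N] (χ : DirichletCharacter ℂ N) (s : ℂ),
    0 < s.re → s.re < 1 → DirichletCharacter.LFunction χ s = 0 → s.re = 1 / 2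

namespace DirichletBertrand

open Complex Set Filter Topology MeasureTheory Metric
open scoped ArithmeticFunction.vonMangoldt

/-- A zero-free holomorphic function on a ball is, in modulus, the exponential of the real part
of a primitive of its logarithmic derivative. -/
lemma exists_log_on_ball {F : ℂ → ℂ} {c : ℂ} {R : ℝ} (hR : 0 < R)
    (hF : DifferentiableOn ℂ F (ball c R)) (h0 : ∀ z ∈ ball c R, F z ≠ 0) :
    ∃ h : ℂ → ℂ, h c = (Real.log ‖F c‖ : ℝ) ∧
      ∀ z ∈ ball c R, HasDerivAt h (deriv F z / F z) z ∧ (h z).re = Real.log ‖F z‖ := by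
  have hc : c ∈ ball c R := mem_ball_self hR
  have hd : DifferentiableOn ℂ (fun z => deriv F z / F z) (ball c R) :=
    (hF.deriv isOpen_ball).div hF h0
  obtain ⟨h, hhc, hh⟩ := hd.isExactOn_ball.with_val_at c ((Real.log ‖F c‖ : ℝ) : ℂ)
  refine ⟨h, hhc, fun z hz => ⟨hh z hz, ?_⟩⟩
  have hder : ∀ z ∈ ball c R, HasDerivAt (fun z => F z * cexp (-h z)) 0 z := by
    intro z hz
    have h1 := (hF.differentiableAt (isOpen_ball.mem_nhds hz)).hasDerivAt
    have h2 := h1.mul (hh z hz).neg.cexp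
    convert! h2 using 1
    field_simp [h0 z hz]
    ring
  have hconst : F z * cexp (-h z) = F c * cexp (-h c) := by
    refine isOpen_ball.is_const_of_deriv_eq_zero (convex_ball c R).isPreconnected
      (fun w hw => (hder w hw).differentiableAt.differentiableWithinAt)
      (fun w hw => (hder w hw).deriv) hz hc
  have hn := congrArg norm hconst
  rw [norm_mul, norm_mul, norm_exp, norm_exp, hhc, neg_re, neg_re, ofReal_re, Real.exp_neg,
    Real.exp_neg, Real.exp_log (norm_pos_iff.2 (h0 c hc)),
    mul_inv_cancel₀ (norm_pos_iff.2 (h0 c hc)).ne', ← div_eq_mul_inv,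
    div_eq_one_iff_eq (Real.exp_pos _).ne'] at hn
  rw [hn, Real.log_exp]

lemma norm_le_of_re_nonpos {c : ℂ} {R : ℝ} (hR : 0 < R) {h : ℂ → ℂ}
    (hd : DifferentiableOn ℂ h (ball c R)) (hre : ∀ z ∈ ball c R, (h z).re ≤ 0)
    {z : ℂ} (hz : z ∈ ball c R) :
    ‖h z‖ ≤ ‖h c‖ * ((R + ‖z - c‖) / (R - ‖z - c‖)) := by
  have hzR : ‖z - c‖ < R := by simpa [dist_eq_norm] using hz
  have hmaps : ∀ w ∈ ball (0 : ℂ) R, c + w ∈ ball c R := fun w hw => by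
    simpa [dist_eq_norm] using hw
  have key : ∀ M : ℝ, 0 < M →
      ‖h z‖ ≤ 2 * M * ‖z - c‖ / (R - ‖z - c‖) + ‖h c‖ * (R + ‖z - c‖) / (R - ‖z - c‖) := by
    intro M hM
    have := borelCaratheodory (f := fun w => h (c + w)) (z := z - c) (R := R) hM
      (hd.comp (by fun_prop) hmaps) (fun w hw => (hre _ (hmaps w hw)).trans hM.le) hR
      (by simpa using hzR)
    simpa using this
  have hlim : Tendsto (fun M : ℝ => 2 * M * ‖z - c‖ / (R - ‖z - c‖)
      + ‖h c‖ * (R + ‖z - c‖) / (R - ‖z - c‖)) (𝓝[>] 0)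
      (𝓝 (2 * 0 * ‖z - c‖ / (R - ‖z - c‖) + ‖h c‖ * (R + ‖z - c‖) / (R - ‖z - c‖))) := by
    refine Tendsto.mono_left ?_ nhdsWithin_le_nhds
    exact Continuous.tendsto (by fun_prop) 0
  have := ge_of_tendsto hlim (eventually_mem_nhdsWithin.mono fun M hM => key M hM)
  rw [← mul_div_assoc]
  simpa using this

/-- Harnack's inequality for `-log ‖F‖`, with `F` zero-free and bounded by `1`. -/
lemma neg_log_norm_le_of_norm_le_one {F : ℂ → ℂ} {c : ℂ} {R : ℝ}
    (hF : DifferentiableOn ℂ F (ball c R)) (h0 : ∀ z ∈ ball c R, F z ≠ 0)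
    (h1 : ∀ z ∈ ball c R, ‖F z‖ ≤ 1) {z : ℂ} (hz : z ∈ ball c R) :
    -Real.log ‖F z‖ ≤ -Real.log ‖F c‖ * ((R + ‖z - c‖) / (R - ‖z - c‖)) := by
  have hR : 0 < R := pos_of_mem_ball hz
  obtain ⟨h, hhc, hh⟩ := exists_log_on_ball hR hF h0
  have hre : ∀ z ∈ ball c R, (h z).re ≤ 0 := fun z hz => by
    rw [(hh z hz).2]; exact Real.log_nonpos (norm_nonneg _) (h1 z hz)
  have := norm_le_of_re_nonpos hR
    (fun z hz => (hh z hz).1.differentiableAt.differentiableWithinAt) hre hz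
  rw [hhc, norm_real, Real.norm_of_nonpos
    (Real.log_nonpos (norm_nonneg _) (h1 c (mem_ball_self hR)))] at this
  refine le_trans ?_ this
  rw [← (hh z hz).2]
  exact (neg_le_abs _).trans (abs_re_le_norm _)

/-- The logarithmic derivative of a zero-free function bounded by `1`. -/
lemma norm_logDeriv_le_of_norm_le_one {F : ℂ → ℂ} {c : ℂ} {R : ℝ} (hR : 0 < R)
    (hF : DifferentiableOn ℂ F (ball c R)) (h0 : ∀ z ∈ ball c R, F z ≠ 0)
    (h1 : ∀ z ∈ ball c R, ‖F z‖ ≤ 1) :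
    ‖deriv F c / F c‖ ≤ 6 * (-Real.log ‖F c‖) / R := by
  obtain ⟨h, hhc, hh⟩ := exists_log_on_ball hR hF h0
  have hre : ∀ z ∈ ball c R, (h z).re ≤ 0 := fun z hz => by
    rw [(hh z hz).2]; exact Real.log_nonpos (norm_nonneg _) (h1 z hz)
  have hdiff : DifferentiableOn ℂ h (ball c R) :=
    fun z hz => (hh z hz).1.differentiableAt.differentiableWithinAt
  have hsub : closedBall c (R / 2) ⊆ ball c R := closedBall_subset_ball (by linarith)
  have hbd : ∀ z ∈ sphere c (R / 2), ‖h z‖ ≤ 3 * (-Real.log ‖F c‖) := by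
    intro z hz
    have := norm_le_of_re_nonpos hR hdiff hre (hsub (sphere_subset_closedBall hz))
    rw [hhc, norm_real, Real.norm_of_nonpos
      (Real.log_nonpos (norm_nonneg _) (h1 c (mem_ball_self hR)))] at this
    rw [mem_sphere_iff_norm] at hz
    rw [hz] at this
    have e : (R + R / 2) / (R - R / 2) = 3 := by field_simp; norm_num
    rw [e] at this
    linarith
  have := norm_deriv_le_of_forall_mem_sphere_norm_le (c := c) (R := R / 2) (f := h) (half_pos hR)
    (hdiff.diffContOnCl_ball hsub) hbd
  rw [(hh c (mem_ball_self hR)).1.deriv] at this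
  refine this.trans_eq ?_
  field_simp
  ring

/-- The Cayley transform from the unit disc to the half-plane `σ < re s`, sending `0` to `σ + 2`. -/
noncomputable def cayley (σ : ℝ) (z : ℂ) : ℂ := σ + 2 * ((1 - z) / (1 + z))

lemma one_add_ne_zero_of_norm_lt_one {z : ℂ} (hz : ‖z‖ < 1) : 1 + z ≠ 0 := by
  intro h
  have : z = -1 := by linear_combination h
  simp [this] at hz

lemma lt_re_cayley (σ : ℝ) {z : ℂ} (hz : ‖z‖ < 1) : σ < (cayley σ z).re := by
  have hne := one_add_ne_zero_of_norm_lt_one hz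
  have hpos : 0 < normSq (1 + z) := normSq_pos.2 hne
  have h2 : normSq z < 1 := by rw [normSq_eq_norm_sq]; nlinarith [norm_nonneg z]
  rw [normSq_apply] at h2
  have : (cayley σ z).re = σ + 2 * ((1 - normSq z) / normSq (1 + z)) := by
    simp only [cayley, add_re, ofReal_re, mul_re, re_ofNat, im_ofNat, zero_mul, sub_zero, div_re,
      normSq_apply, sub_re, one_re, sub_im, one_im, add_im]
    ring
  rw [this, normSq_apply z]
  have : 0 < (1 - (z.re * z.re + z.im * z.im)) / normSq (1 + z) := div_pos (by linarith) hpos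
  linarith

lemma differentiableAt_cayley (σ : ℝ) {z : ℂ} (hz : ‖z‖ < 1) :
    DifferentiableAt ℂ (cayley σ) z := by
  have hne := one_add_ne_zero_of_norm_lt_one hz
  unfold cayley
  fun_prop (disch := assumption)

/-- The point of the unit circle which `cayley σ` sends to `σ + t * I`. -/
noncomputable def circlePoint (t : ℝ) : ℂ := (1 - t / 2 * I) / (1 + t / 2 * I)

lemma one_add_mul_I_ne_zero (t : ℝ) : (1 : ℂ) + t / 2 * I ≠ 0 := by
  intro h
  have := congrArg re h
  simp at this

lemma one_sub_mul_I_ne_zero (t : ℝ) : (1 : ℂ) - t / 2 * I ≠ 0 := by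
  intro h
  have := congrArg re h
  simp at this

lemma one_add_circlePoint (t : ℝ) : (1 : ℂ) + circlePoint t = 2 / (1 + t / 2 * I) := by
  have h := one_add_mul_I_ne_zero t
  rw [circlePoint, eq_div_iff h, add_mul, div_mul_cancel₀ _ h]
  ring

lemma one_add_circlePoint_ne_zero (t : ℝ) : (1 : ℂ) + circlePoint t ≠ 0 := by
  rw [one_add_circlePoint]
  exact div_ne_zero two_ne_zero (one_add_mul_I_ne_zero t)

lemma cayley_circlePoint (σ t : ℝ) : cayley σ (circlePoint t) = σ + t * I := by
  have h := one_add_mul_I_ne_zero t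
  have : (1 - circlePoint t) / (1 + circlePoint t) = t / 2 * I := by
    rw [div_eq_iff (one_add_circlePoint_ne_zero t), one_add_circlePoint, circlePoint,
      mul_div_assoc', eq_div_iff h, sub_mul, div_mul_cancel₀ _ h]
    ring
  rw [cayley, this]
  ring

lemma circleMap_arctan (t : ℝ) : circleMap 0 1 (-2 * Real.arctan (t / 2)) = circlePoint t := by
  have h := one_add_mul_I_ne_zero t
  have h' := one_sub_mul_I_ne_zero t
  have hs : (1 : ℂ) + (t / 2) ^ 2 ≠ 0 := by
    have : (1 : ℂ) + (t / 2) ^ 2 = (1 + t / 2 * I) * (1 - t / 2 * I) := by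
      linear_combination ((t : ℂ) ^ 2 / 4) * I_sq
    rw [this]; exact mul_ne_zero h h'
  have hc : (Real.cos (-2 * Real.arctan (t / 2)) : ℂ) = (1 - (t / 2) ^ 2) / (1 + (t / 2) ^ 2) := by
    rw [show -2 * Real.arctan (t / 2) = -(2 * Real.arctan (t / 2)) by ring, Real.cos_neg,
      Real.cos_two_mul, Real.cos_sq_arctan]
    push_cast
    rw [eq_div_iff hs, sub_mul, mul_assoc, one_div, inv_mul_cancel₀ hs]
    ring
  have hsn : (Real.sin (-2 * Real.arctan (t / 2)) : ℂ) = -(2 * (t / 2)) / (1 + (t / 2) ^ 2) := by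
    rw [show -2 * Real.arctan (t / 2) = -(2 * Real.arctan (t / 2)) by ring, Real.sin_neg,
      Real.sin_two_mul]
    have hcos := Real.cos_arctan_pos (t / 2)
    have : Real.sin (Real.arctan (t / 2)) = (t / 2) * Real.cos (Real.arctan (t / 2)) := by
      have := Real.tan_arctan (t / 2)
      rw [Real.tan_eq_sin_div_cos, div_eq_iff hcos.ne'] at this
      exact this
    rw [this, show 2 * (t / 2 * Real.cos (Real.arctan (t / 2))) * Real.cos (Real.arctan (t / 2))
      = 2 * (t / 2) * Real.cos (Real.arctan (t / 2)) ^ 2 by ring, Real.cos_sq_arctan]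
    push_cast
    field_simp
  rw [circleMap, exp_mul_I, ← ofReal_cos, ← ofReal_sin, hc, hsn, circlePoint, zero_add,
    ofReal_one, one_mul, div_mul_eq_mul_div, ← add_div, div_eq_div_iff hs h]
  linear_combination (-2 * (t / 2 : ℂ) ^ 2) * I_sq

lemma norm_circlePoint (t : ℝ) : ‖circlePoint t‖ = 1 := by
  rw [← circleMap_arctan]; simp

/-- Rational parametrisation of the integral over the unit circle. -/
lemma lintegral_circle_eq (f : ℂ → ENNReal) :
    ∫⁻ θ in Ioc (-Real.pi) Real.pi, f (circleMap 0 1 θ)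
      = ∫⁻ t : ℝ, ENNReal.ofReal (4 / (4 + t ^ 2)) * f (circlePoint t) := by
  have himg : Set.image (fun t : ℝ => -2 * Real.arctan (t / 2)) univ = Ioo (-Real.pi) Real.pi := by
    ext θ
    simp only [mem_image, mem_univ, true_and]
    constructor
    · rintro ⟨t, rfl⟩
      have := Real.arctan_mem_Ioo (t / 2)
      constructor <;> linarith [this.1, this.2]
    · rintro ⟨h1, h2⟩
      refine ⟨2 * Real.tan (-θ / 2), ?_⟩
      rw [mul_div_cancel_left₀ _ two_ne_zero, Real.arctan_tan (by linarith) (by linarith)]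
      ring
  have hinj : InjOn (fun t : ℝ => -2 * Real.arctan (t / 2)) univ := by
    intro a _ b _ hab
    have := Real.arctan_injective (mul_left_cancel₀ (by norm_num : (-2 : ℝ) ≠ 0) hab)
    linarith
  have hder : ∀ t ∈ (univ : Set ℝ), HasDerivWithinAt (fun t : ℝ => -2 * Real.arctan (t / 2))
      (-(4 / (4 + t ^ 2))) univ t := by
    intro t _
    have h := (((hasDerivAt_id t).div_const 2).arctan.const_mul (-2))
    refine HasDerivAt.hasDerivWithinAt ?_
    convert! h using 1
    simp only [id]
    have : 4 + t ^ 2 ≠ 0 := by positivity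
    have : 1 + (t / 2) ^ 2 ≠ 0 := by positivity
    field_simp
    ring
  rw [setLIntegral_congr (Ioo_ae_eq_Ioc (μ := volume)).symm, ← himg,
    lintegral_image_eq_lintegral_abs_deriv_mul MeasurableSet.univ hder hinj, setLIntegral_univ]
  refine lintegral_congr fun t => ?_
  rw [abs_neg, abs_of_nonneg (by positivity), circleMap_arctan]

/-- One-sided Poisson formula: the Poisson average over a vertical line of `-log ‖F‖`, for `F`
zero-free and bounded by `1` on a half-plane, is at most its value at the centre. -/
lemma lintegral_neg_log_norm_le {F : ℂ → ℂ} {α σ : ℝ} (hσ : α < σ)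
    (hF : DifferentiableOn ℂ F {s | α < s.re}) (h0 : ∀ s : ℂ, α < s.re → F s ≠ 0)
    (h1 : ∀ s : ℂ, α < s.re → ‖F s‖ ≤ 1) :
    ∫⁻ t : ℝ, ENNReal.ofReal (4 / (4 + t ^ 2)) * ENNReal.ofReal (-Real.log ‖F (σ + t * I)‖)
      ≤ ENNReal.ofReal (2 * Real.pi * (-Real.log ‖F (σ + 2)‖)) := by
  have hopen : IsOpen {s : ℂ | α < s.re} := isOpen_lt continuous_const continuous_re
  set r : ℕ → ℝ := fun n => 1 - 1 / ((n : ℝ) + 2) with hr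
  have hr0 : ∀ n, 0 ≤ r n := fun n => by
    have : 1 / ((n : ℝ) + 2) ≤ 1 := by
      rw [div_le_one (by positivity)]
      linarith [n.cast_nonneg (α := ℝ)]
    simp only [hr]; linarith
  have hr1 : ∀ n, r n < 1 := fun n => by
    have : 0 < 1 / ((n : ℝ) + 2) := by positivity
    simp only [hr]; linarith
  have hrlim : Tendsto r atTop (𝓝 1) := by
    have h := (tendsto_const_nhds (x := (2:ℝ))).congr (fun _ => rfl) |>.add_atTop
      (tendsto_natCast_atTop_atTop (R := ℝ)) |>.const_div_atTop 1
    have := h.const_sub 1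
    simpa [hr, add_comm] using this
  set v : ℂ → ℝ := fun s => -Real.log ‖F s‖ with hv
  have hvc : ContinuousOn v {s | α < s.re} := by
    intro s hs
    exact ((hF.continuousOn.norm.log fun s hs => (norm_pos_iff.2 (h0 s hs)).ne').neg) s hs
  -- mean value property on each smaller circle
  have hmem : ∀ n (z : ℂ), ‖z‖ ≤ 1 → ‖(r n : ℂ) * z‖ < 1 := fun n z hz => by
    rw [norm_mul, norm_real, Real.norm_of_nonneg (hr0 n)]
    nlinarith [hr0 n, hr1 n, norm_nonneg z]
  have hcont : ∀ n, ContinuousOn (fun z : ℂ => v (cayley σ (r n * z))) (closedBall 0 1) := by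
    intro n
    refine hvc.comp (fun z hz => ContinuousAt.continuousWithinAt ?_) fun z hz =>
      hσ.trans (lt_re_cayley σ (hmem n z (by simpa using hz)))
    exact ((differentiableAt_cayley σ (hmem n z (by simpa using hz))).continuousAt).comp
      (by fun_prop : ContinuousAt (fun z : ℂ => (r n : ℂ) * z) z)
  have hmean : ∀ n, Real.circleAverage (fun z => v (cayley σ (r n * z))) 0 1 = v (σ + 2) := by
    intro n
    have : InnerProductSpace.HarmonicOnNhd (fun z => v (cayley σ (r n * z)))
        (closedBall (0 : ℂ) |1|) := by
      intro z hz
      have hz1 : ‖(r n : ℂ) * z‖ < 1 := hmem n z (by simpa using hz)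
      have hlt := hσ.trans (lt_re_cayley σ hz1)
      have hd : ∀ᶠ w in 𝓝 z, DifferentiableAt ℂ (fun w => F (cayley σ (r n * w))) w := by
        have hev : ∀ᶠ w in 𝓝 z, ‖(r n : ℂ) * w‖ < 1 :=
          (by fun_prop : Continuous fun w : ℂ => ‖(r n : ℂ) * w‖).continuousAt.eventually_lt
            continuousAt_const hz1
        filter_upwards [hev] with w hw
        have h1 : DifferentiableAt ℂ F (cayley σ (r n * w)) :=
          hF.differentiableAt (hopen.mem_nhds (hσ.trans (lt_re_cayley σ hw)))
        exact h1.comp w ((differentiableAt_cayley σ hw).comp w (by fun_prop))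
      have hA : AnalyticAt ℂ (fun w => F (cayley σ (r n * w))) z :=
        analyticAt_iff_eventually_differentiableAt.2 hd
      exact (hA.harmonicAt_log_norm (h0 _ hlt)).neg
    rw [InnerProductSpace.HarmonicOnNhd.circleAverage_eq this]
    simp [cayley]
  have hv0 : ∀ s : ℂ, α < s.re → 0 ≤ v s := fun s hs =>
    neg_nonneg.2 (Real.log_nonpos (norm_nonneg _) (h1 s hs))
  have hlin : ∀ n, ∫⁻ t : ℝ, ENNReal.ofReal (4 / (4 + t ^ 2)) *
      ENNReal.ofReal (v (cayley σ (r n * circlePoint t)))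
      = ENNReal.ofReal (2 * Real.pi * v (σ + 2)) := by
    intro n
    rw [← lintegral_circle_eq (fun z => ENNReal.ofReal (v (cayley σ (r n * z))))]
    have hci : Continuous fun θ : ℝ => v (cayley σ (r n * circleMap 0 1 θ)) := by
      rw [← continuousOn_univ]
      exact (hcont n).comp (continuous_circleMap 0 1).continuousOn fun θ _ => by
        simp
    rw [← ofReal_integral_eq_lintegral_ofReal]
    · congr 1
      rw [← hmean n, Real.circleAverage_def, smul_eq_mul,
        mul_inv_cancel_left₀ Real.two_pi_pos.ne',
        ← intervalIntegral.integral_of_le (by linarith [Real.pi_pos])]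
      have hp : Function.Periodic (fun θ : ℝ => v (cayley σ (r n * circleMap 0 1 θ)))
          (2 * Real.pi) := fun θ => by simp only [periodic_circleMap (0:ℂ) 1 θ]
      have := hp.intervalIntegral_add_eq (-Real.pi) 0
      rw [zero_add, show -Real.pi + 2 * Real.pi = Real.pi by ring] at this
      exact this
    · exact (hci.integrableOn_Icc).mono_set Ioc_subset_Icc_self
    · refine ae_of_all _ fun θ => hv0 _ (hσ.trans (lt_re_cayley σ (hmem n _ ?_)))
      simp
  have hptw : ∀ t : ℝ, Tendsto (fun n => ENNReal.ofReal (4 / (4 + t ^ 2)) *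
      ENNReal.ofReal (v (cayley σ (r n * circlePoint t)))) atTop
      (𝓝 (ENNReal.ofReal (4 / (4 + t ^ 2)) * ENNReal.ofReal (v (σ + t * I)))) := by
    intro t
    refine ENNReal.Tendsto.const_mul ?_ (Or.inr ENNReal.ofReal_ne_top)
    refine ENNReal.tendsto_ofReal ?_
    have hne := one_add_circlePoint_ne_zero t
    have hcay : ContinuousAt (cayley σ) (circlePoint t) := by
      unfold cayley; fun_prop (disch := assumption)
    have hz : Tendsto (fun n => (r n : ℂ) * circlePoint t) atTop (𝓝 (circlePoint t)) := by
      have := ((continuous_ofReal.tendsto 1).comp hrlim).mul_const (circlePoint t)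
      simpa using this
    have h2 := hcay.tendsto.comp hz
    rw [cayley_circlePoint] at h2
    exact ((hvc.continuousAt (hopen.mem_nhds (by simpa using hσ))).tendsto).comp h2
  calc ∫⁻ t : ℝ, ENNReal.ofReal (4 / (4 + t ^ 2)) * ENNReal.ofReal (v (σ + t * I))
      = ∫⁻ t : ℝ, liminf (fun n => ENNReal.ofReal (4 / (4 + t ^ 2)) *
          ENNReal.ofReal (v (cayley σ (r n * circlePoint t)))) atTop :=
        lintegral_congr fun t => (hptw t).liminf_eq.symm
    _ ≤ liminf (fun n => ∫⁻ t : ℝ, ENNReal.ofReal (4 / (4 + t ^ 2)) *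
          ENNReal.ofReal (v (cayley σ (r n * circlePoint t)))) atTop := by
        refine lintegral_liminf_le fun n => ?_
        have hcp : Continuous circlePoint := by
          unfold circlePoint
          exact Continuous.div (by fun_prop) (by fun_prop) one_add_mul_I_ne_zero
        have : Continuous fun t : ℝ => v (cayley σ (r n * circlePoint t)) := by
          rw [← continuousOn_univ]
          exact (hcont n).comp hcp.continuousOn fun t _ => by simp [norm_circlePoint]
        exact (by fun_prop : Measurable fun t : ℝ => ENNReal.ofReal (4 / (4 + t ^ 2))).mul
          this.measurable.ennreal_ofReal
    _ = ENNReal.ofReal (2 * Real.pi * v (σ + 2)) := by simp [hlin]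

lemma integrable_const_div_one_add_sq (M : ℝ) : Integrable fun t : ℝ => M / (1 + t ^ 2) := by
  simpa [div_eq_mul_inv] using integrable_inv_one_add_sq.const_mul M

/-- Shifting a vertical line of integration. -/
lemma integral_vertical_eq {f : ℂ → ℂ} {a b M : ℝ} (hab : a ≤ b)
    (hf : ∀ s : ℂ, a ≤ s.re → s.re ≤ b → DifferentiableAt ℂ f s)
    (hM : ∀ σ t : ℝ, a ≤ σ → σ ≤ b → ‖f (σ + t * I)‖ ≤ M / (1 + t ^ 2)) :
    ∫ t : ℝ, f (a + t * I) = ∫ t : ℝ, f (b + t * I) := by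
  have hInt : ∀ σ : ℝ, a ≤ σ → σ ≤ b → Integrable fun t : ℝ => f (σ + t * I) := by
    intro σ h1 h2
    refine (integrable_const_div_one_add_sq M).mono' ?_ (ae_of_all _ fun t => hM σ t h1 h2)
    refine Continuous.aestronglyMeasurable (continuous_iff_continuousAt.2 fun t => ?_)
    exact ContinuousAt.comp (f := fun t : ℝ => (σ : ℂ) + t * I)
      (hf _ (by simpa using h1) (by simpa using h2)).continuousAt (by fun_prop)
  have hlim : ∀ σ : ℝ, a ≤ σ → σ ≤ b → Tendsto (fun n : ℕ => ∫ t in (-(n : ℝ))..n, f (σ + t * I))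
      atTop (𝓝 (∫ t : ℝ, f (σ + t * I))) := fun σ h1 h2 =>
    intervalIntegral_tendsto_integral (hInt σ h1 h2)
      (tendsto_neg_atBot_iff.2 tendsto_natCast_atTop_atTop) tendsto_natCast_atTop_atTop
  have hbound : Tendsto (fun n : ℕ => M / (1 + (n : ℝ) ^ 2) * |b - a|) atTop (𝓝 0) := by
    have h1 : Tendsto (fun n : ℕ => 1 + (n : ℝ) ^ 2) atTop atTop :=
      tendsto_atTop_add_const_left _ _
        ((tendsto_pow_atTop two_ne_zero).comp tendsto_natCast_atTop_atTop)
    simpa using (h1.const_div_atTop M).mul_const |b - a|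
  have hhor : ∀ ε : ℝ, ε ^ 2 = 1 → Tendsto (fun n : ℕ => ∫ x in a..b, f (x + (ε * n : ℝ) * I))
      atTop (𝓝 0) := by
    intro ε hε
    refine squeeze_zero_norm (fun n => ?_) hbound
    refine intervalIntegral.norm_integral_le_of_norm_le_const fun x hx => ?_
    rw [uIoc_of_le hab] at hx
    have := hM x (ε * n) hx.1.le hx.2
    rwa [mul_pow, hε, one_mul] at this
  have hrect : ∀ n : ℕ,
      (∫ x in a..b, f (x + ((-1) * n : ℝ) * I)) - (∫ x in a..b, f (x + (1 * n : ℝ) * I))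
      + I * (∫ t in (-(n : ℝ))..n, f (b + t * I))
      - I * (∫ t in (-(n : ℝ))..n, f (a + t * I)) = 0 := by
    intro n
    have := integral_boundary_rect_eq_zero_of_differentiableOn f ⟨a, -n⟩ ⟨b, n⟩ (by
      intro s hs
      rw [mem_reProdIm, uIcc_of_le hab] at hs
      exact (hf s hs.1.1 hs.1.2).differentiableWithinAt)
    simpa [smul_eq_mul] using this
  have h0 := (((hhor (-1) (by norm_num)).sub (hhor 1 (by norm_num))).add
    ((hlim b hab le_rfl).const_mul I)).sub ((hlim a le_rfl hab).const_mul I)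
  have h1 := tendsto_nhds_unique h0
    ((tendsto_const_nhds (x := (0:ℂ))).congr fun n => (hrect n).symm)
  have h2 : I * ((∫ t : ℝ, f (b + t * I)) - ∫ t : ℝ, f (a + t * I)) = 0 := by
    linear_combination h1
  rcases mul_eq_zero.1 h2 with h | h
  · exact absurd h I_ne_zero
  · exact (sub_eq_zero.1 h).symm

lemma mellin_eq_intervalIntegral {f : ℝ → ℂ} (hsupp : ∀ u ∉ Icc (1 / 2 : ℝ) 1, f u = 0) (s : ℂ) :
    mellin f s = ∫ u in (1 / 4 : ℝ)..2, (u : ℂ) ^ (s - 1) * f u := by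
  rw [intervalIntegral.integral_of_le (by norm_num), mellin]
  simp only [smul_eq_mul]
  refine (setIntegral_eq_of_subset_of_forall_sdiff_eq_zero measurableSet_Ioi
    (fun u hu => lt_trans (by norm_num) hu.1) fun u hu => ?_)
  rw [hsupp u fun h => hu.2 ⟨by linarith [h.1], by linarith [h.2]⟩, mul_zero]

/-- Smooth functions supported in `[1/2, 1]`. -/
def IsWeight (f : ℝ → ℂ) : Prop :=
  ContDiff ℝ (⊤ : ℕ∞) f ∧ ∀ u ∉ Icc (1 / 2 : ℝ) 1, f u = 0

lemma IsWeight.mul_deriv {f : ℝ → ℂ} (hf : IsWeight f) :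
    IsWeight fun u => -(u : ℂ) * deriv f u := by
  refine ⟨?_, fun u hu => ?_⟩
  · have h1 : ContDiff ℝ (⊤ : ℕ∞) (deriv f) := (contDiff_infty_iff_deriv.1 hf.1).2
    have h2 : ContDiff ℝ (⊤ : ℕ∞) fun u : ℝ => (u : ℂ) := ofRealCLM.contDiff
    exact h2.neg.mul h1
  · have : f =ᶠ[𝓝 u] fun _ => 0 := by
      filter_upwards [isClosed_Icc.isOpen_compl.mem_nhds hu] with v hv using hf.2 v hv
    beta_reduce
    rw [this.deriv_eq, deriv_const, mul_zero]

lemma IsWeight.mul_mellin {f : ℝ → ℂ} (hf : IsWeight f) {s : ℂ} (hs : s ≠ 0) :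
    s * mellin f s = mellin (fun u => -(u : ℂ) * deriv f u) s := by
  rw [mellin_eq_intervalIntegral hf.2, mellin_eq_intervalIntegral hf.mul_deriv.2]
  have hpos : ∀ u ∈ uIcc (1 / 4 : ℝ) 2, 0 < u := fun u hu => by
    rw [uIcc_of_le (by norm_num)] at hu
    linarith [hu.1]
  have hcont : ∀ z : ℂ, ContinuousOn (fun u : ℝ => (u : ℂ) ^ z) (uIcc (1 / 4 : ℝ) 2) :=
    fun z u hu => (continuousAt_ofReal_cpow_const u z
      (Or.inr (hpos u hu).ne')).continuousWithinAt
  have hfc : Continuous f := hf.1.continuous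
  have hfd : Continuous (deriv f) := hf.1.continuous_deriv (by simp)
  have hd : ∀ u ∈ uIcc (1 / 4 : ℝ) 2, HasDerivAt (fun u : ℝ => (u : ℂ) ^ s * f u)
      (s * (u : ℂ) ^ (s - 1) * f u + (u : ℂ) ^ s * deriv f u) u := fun u hu =>
    (hasDerivAt_ofReal_cpow_const (hpos u hu).ne' hs).mul
      (hf.1.differentiable (by simp) u).hasDerivAt
  have h1 : IntervalIntegrable (fun u : ℝ => s * (u : ℂ) ^ (s - 1) * f u) volume (1 / 4) 2 :=
    ((continuousOn_const.mul (hcont _)).mul hfc.continuousOn).intervalIntegrable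
  have h2 : IntervalIntegrable (fun u : ℝ => (u : ℂ) ^ s * deriv f u) volume (1 / 4) 2 :=
    ((hcont _).mul hfd.continuousOn).intervalIntegrable
  have hFTC := intervalIntegral.integral_eq_sub_of_hasDerivAt hd (h1.add h2)
  rw [intervalIntegral.integral_add h1 h2, hf.2 2 (by norm_num), hf.2 (1 / 4) (by norm_num),
    mul_zero, mul_zero, sub_zero] at hFTC
  simp only [mul_assoc] at hFTC
  rw [intervalIntegral.integral_const_mul] at hFTC
  rw [eq_neg_of_add_eq_zero_left hFTC, ← intervalIntegral.integral_neg]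
  refine intervalIntegral.integral_congr fun u hu => ?_
  have hu0 : (u : ℂ) ≠ 0 := ofReal_ne_zero.2 (hpos u hu).ne'
  simp only [cpow_sub _ _ hu0, cpow_one]
  field_simp

lemma IsWeight.exists_norm_mellin_le {f : ℝ → ℂ} (hf : IsWeight f) :
    ∃ C : ℝ, 0 ≤ C ∧ ∀ s : ℂ, 0 ≤ s.re → ‖mellin f s‖ ≤ C := by
  have hc : HasCompactSupport f := HasCompactSupport.intro isCompact_Icc hf.2
  obtain ⟨B, hB⟩ := hf.1.continuous.bounded_above_of_compact_support hc
  have hB0 : 0 ≤ B := (norm_nonneg _).trans (hB 0)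
  refine ⟨2 * B * |2 - 1 / 4|, by positivity, fun s hs => ?_⟩
  rw [mellin_eq_intervalIntegral hf.2]
  refine intervalIntegral.norm_integral_le_of_norm_le_const fun u hu => ?_
  rw [uIoc_of_le (by norm_num)] at hu
  by_cases h : u ∈ Icc (1 / 2 : ℝ) 1
  · have hu0 : 0 < u := by linarith [hu.1]
    rw [norm_mul, norm_cpow_eq_rpow_re_of_pos hu0]
    refine mul_le_mul ?_ (hB u) (norm_nonneg _) (by norm_num)
    calc u ^ (s - 1).re ≤ u ^ (-1 : ℝ) :=
          Real.rpow_le_rpow_of_exponent_ge hu0 h.2 (by simpa using hs)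
      _ ≤ 2 := by
          rw [Real.rpow_neg_one, inv_le_comm₀ hu0 two_pos]
          linarith [h.1]
  · rw [hf.2 u h, mul_zero, norm_zero]
    positivity

lemma IsWeight.exists_norm_mellin_le_div {f : ℝ → ℂ} (hf : IsWeight f) :
    ∃ C : ℝ, 0 ≤ C ∧ ∀ s : ℂ, 1 / 2 ≤ s.re → ‖mellin f s‖ ≤ C / (1 + s.im ^ 2) ^ 2 := by
  obtain ⟨C, hC0, hC⟩ := hf.mul_deriv.mul_deriv.mul_deriv.mul_deriv.exists_norm_mellin_le
  refine ⟨16 * C, by positivity, fun s hs => ?_⟩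
  have hs0 : s ≠ 0 := by
    rintro rfl
    norm_num at hs
  have h := hC s (by linarith)
  rw [← hf.mul_deriv.mul_deriv.mul_deriv.mul_mellin hs0, ← hf.mul_deriv.mul_deriv.mul_mellin hs0,
    ← hf.mul_deriv.mul_mellin hs0, ← hf.mul_mellin hs0] at h
  simp only [norm_mul] at h
  have hn : (1 + s.im ^ 2) / 4 ≤ ‖s‖ ^ 2 := by
    rw [← normSq_eq_norm_sq, normSq_apply]
    nlinarith
  have hn2 : ((1 + s.im ^ 2) / 4) ^ 2 ≤ (‖s‖ ^ 2) ^ 2 := by gcongr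
  rw [le_div_iff₀ (by positivity)]
  nlinarith [mul_le_mul_of_nonneg_left hn2 (norm_nonneg (mellin f s))]

lemma IsWeight.locallyIntegrableOn {f : ℝ → ℂ} (hf : IsWeight f) :
    LocallyIntegrableOn f (Ioi 0) :=
  hf.1.continuous.locallyIntegrable.locallyIntegrableOn _

lemma IsWeight.isBigO_atTop {f : ℝ → ℂ} (hf : IsWeight f) (a : ℝ) :
    f =O[atTop] fun u : ℝ => u ^ a := by
  refine Asymptotics.IsBigO.of_bound 1 ?_
  filter_upwards [eventually_gt_atTop 1] with u hu
  rw [hf.2 u fun h => absurd h.2 (not_le.2 hu), norm_zero]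
  positivity

lemma IsWeight.isBigO_zero {f : ℝ → ℂ} (hf : IsWeight f) (a : ℝ) :
    f =O[𝓝[>] 0] fun u : ℝ => u ^ a := by
  refine Asymptotics.IsBigO.of_bound 1 ?_
  filter_upwards [nhdsWithin_le_nhds (Iio_mem_nhds (by norm_num : (0 : ℝ) < 1 / 2))] with u hu
  rw [hf.2 u fun h => absurd h.1 (not_le.2 hu), norm_zero]
  positivity

lemma IsWeight.differentiable_mellin {f : ℝ → ℂ} (hf : IsWeight f) :
    Differentiable ℂ (mellin f) := fun s =>
  mellin_differentiableAt_of_isBigO_rpow (a := s.re + 1) (b := s.re - 1) hf.locallyIntegrableOn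
    (hf.isBigO_atTop _) (by linarith) (hf.isBigO_zero _) (by linarith)

lemma IsWeight.integrable_mellin {f : ℝ → ℂ} (hf : IsWeight f) {σ : ℝ} (hσ : 1 / 2 ≤ σ) :
    Integrable fun t : ℝ => mellin f (σ + t * I) := by
  obtain ⟨C, hC0, hC⟩ := hf.exists_norm_mellin_le_div
  refine (integrable_const_div_one_add_sq C).mono' ?_ (ae_of_all _ fun t => ?_)
  · exact (hf.differentiable_mellin.continuous.comp (by fun_prop)).aestronglyMeasurable
  · refine (hC _ (by simpa using hσ)).trans ?_
    simp only [add_im, ofReal_im, mul_im, ofReal_re, I_im, mul_one, I_re, mul_zero, add_zero,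
      zero_add]
    gcongr
    nlinarith [sq_nonneg t, sq_nonneg (t ^ 2)]

lemma IsWeight.integral_mellin {f : ℝ → ℂ} (hf : IsWeight f) {x : ℝ} (hx : 0 < x) :
    ∫ t : ℝ, (x : ℂ) ^ (-(2 + t * I)) * mellin f (2 + t * I) = 2 * Real.pi * f x := by
  have h := mellinInv_mellin_eq 2 f hx
    (mellinConvergent_of_isBigO_rpow (a := 3) (b := 1) hf.locallyIntegrableOn
      (hf.isBigO_atTop _) (by norm_num) (hf.isBigO_zero _) (by norm_num))
    (hf.integrable_mellin (by norm_num)) hf.1.continuous.continuousAt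
  rw [mellinInv, Complex.real_smul] at h
  simp only [smul_eq_mul, ofReal_ofNat] at h
  rw [← h]
  have : (Real.pi : ℂ) ≠ 0 := ofReal_ne_zero.2 Real.pi_ne_zero
  push_cast
  rw [← mul_assoc, mul_one_div_cancel (mul_ne_zero two_ne_zero this), one_mul]

/-- The error term in the approximation of a summatory function by a linear function. -/
noncomputable def sumError (f : ℕ → ℂ) (c : ℂ) : ℝ → ℂ :=
  (Ioi (1 : ℝ)).indicator fun t => (∑ k ∈ Finset.Icc 1 ⌊t⌋₊, f k) - c * t

section sumError

variable {f : ℕ → ℂ} {c : ℂ} {B : ℝ}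

lemma measurable_sumError : Measurable (sumError f c) := by
  refine Measurable.indicator (Measurable.sub ?_ (by fun_prop)) measurableSet_Ioi
  exact (measurable_from_nat (f := fun n => ∑ k ∈ Finset.Icc 1 n, f k)).comp Nat.measurable_floor

lemma locallyIntegrableOn_sumError (hB : ∀ t : ℝ, ‖sumError f c t‖ ≤ B) :
    LocallyIntegrableOn (sumError f c) (Ioi 0) := by
  refine LocallyIntegrable.locallyIntegrableOn ?_ _
  refine (locallyIntegrable_const B).mono measurable_sumError.aestronglyMeasurable
    (ae_of_all _ fun t => ?_)
  rw [Real.norm_eq_abs]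
  exact (hB t).trans (le_abs_self B)

lemma sumError_isBigO_atTop (hB : ∀ t : ℝ, ‖sumError f c t‖ ≤ B) :
    sumError f c =O[atTop] fun t : ℝ => t ^ (-0 : ℝ) := by
  refine Asymptotics.IsBigO.of_bound B (Eventually.of_forall fun t => ?_)
  simpa using hB t

lemma sumError_isBigO_zero (b : ℝ) : sumError f c =O[𝓝[>] 0] fun t : ℝ => t ^ b := by
  refine Asymptotics.IsBigO.of_bound 1 ?_
  filter_upwards [nhdsWithin_le_nhds (Iio_mem_nhds (zero_lt_one (α := ℝ)))] with t ht
  rw [sumError, indicator_of_notMem (by simpa using ht.le), norm_zero]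
  positivity

lemma differentiableAt_mellin_sumError (hB : ∀ t : ℝ, ‖sumError f c t‖ ≤ B)
    {s : ℂ} (hs : s.re < 0) :
    DifferentiableAt ℂ (mellin (sumError f c)) s :=
  mellin_differentiableAt_of_isBigO_rpow (a := 0) (b := s.re - 1)
    (locallyIntegrableOn_sumError hB) (sumError_isBigO_atTop hB) hs (sumError_isBigO_zero _)
    (by linarith)

lemma mellin_sumError (s : ℂ) : mellin (sumError f c) s =
    ∫ t in Ioi (1 : ℝ), (t : ℂ) ^ (s - 1) * ((∑ k ∈ Finset.Icc 1 ⌊t⌋₊, f k) - c * t) := by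
  rw [mellin, ← integral_indicator measurableSet_Ioi, ← integral_indicator measurableSet_Ioi]
  congr 1 with t
  by_cases h : t ∈ Ioi (1 : ℝ)
  · rw [indicator_of_mem h, indicator_of_mem (mem_Ioi.2 (zero_lt_one.trans (mem_Ioi.1 h))),
      sumError,
      indicator_of_mem h, smul_eq_mul]
  · rw [indicator_of_notMem h, sumError]
    by_cases h' : t ∈ Ioi (0 : ℝ) <;> simp [h, h']

lemma norm_mellin_sumError_le (hB : ∀ t : ℝ, ‖sumError f c t‖ ≤ B)
    {s : ℂ} (hs : s.re < 0) :
    ‖mellin (sumError f c) s‖ ≤ B / -s.re := by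
  have hInt : IntegrableOn (fun t : ℝ => B * t ^ (s.re - 1)) (Ioi 1) :=
    (integrableOn_Ioi_rpow_of_lt (by linarith) zero_lt_one).const_mul B
  rw [mellin_sumError]
  refine (norm_integral_le_of_norm_le hInt ?_).trans_eq ?_
  · refine (ae_restrict_iff' measurableSet_Ioi).2 (ae_of_all _ fun t ht => ?_)
    have ht0 : (0 : ℝ) < t := lt_trans zero_lt_one ht
    have h := hB t
    rw [sumError, indicator_of_mem ht] at h
    rw [norm_mul, norm_cpow_eq_rpow_re_of_pos ht0, mul_comm]
    simp only [sub_re, one_re]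
    gcongr
  · rw [integral_const_mul, integral_Ioi_rpow_of_lt (by linarith) zero_lt_one, Real.one_rpow]
    have : s.re ≠ 0 := hs.ne
    rw [sub_add_cancel]
    field_simp

lemma LSeries_eq_mellin_sumError (hB : ∀ t : ℝ, ‖sumError f c t‖ ≤ B)
    {s : ℂ} (hs : 1 < s.re) (hS : LSeriesSummable f s) :
    LSeries f s = c * s / (s - 1) + s * mellin (sumError f c) (-s) := by
  have hO : (fun n : ℕ => ∑ k ∈ Finset.Icc 1 n, f k) =O[atTop] fun n : ℕ => (n : ℝ) ^ (1 : ℝ) := by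
    refine Asymptotics.IsBigO.of_bound (B + ‖c‖) ?_
    filter_upwards [eventually_gt_atTop 1] with n hn
    have hn1 : (1 : ℝ) < n := by exact_mod_cast hn
    have h := hB n
    rw [sumError, indicator_of_mem (mem_Ioi.2 hn1), Nat.floor_natCast] at h
    have hB0 : 0 ≤ B := (norm_nonneg _).trans h
    have h2 := norm_sub_norm_le (∑ k ∈ Finset.Icc 1 n, f k) (c * (n : ℝ))
    rw [norm_mul, norm_real, Real.norm_of_nonneg (by positivity)] at h2
    rw [Real.rpow_one, Real.norm_of_nonneg (by positivity)]
    nlinarith [norm_nonneg c]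
  rw [LSeries_eq_mul_integral f zero_le_one hs hS hO, mellin_sumError]
  have hs1 : s - 1 ≠ 0 := fun h => by
    rw [sub_eq_zero.1 h, one_re] at hs
    exact lt_irrefl _ hs
  have hconv : IntegrableOn (fun t : ℝ =>
      (t : ℂ) ^ (-s - 1) * ((∑ k ∈ Finset.Icc 1 ⌊t⌋₊, f k) - c * t)) (Ioi 1) := by
    have h := mellinConvergent_of_isBigO_rpow (a := 0) (b := (-s).re - 1) (s := -s)
      (locallyIntegrableOn_sumError hB) (sumError_isBigO_atTop hB) (by simp; linarith)
      (sumError_isBigO_zero (c := c) _) (by linarith)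
    refine (h.mono_set (Ioi_subset_Ioi zero_le_one)).congr_fun (fun t ht => ?_) measurableSet_Ioi
    simp only [sumError, indicator_of_mem ht, smul_eq_mul]
  have hlin : IntegrableOn (fun t : ℝ => c * (t : ℂ) ^ (-s)) (Ioi 1) :=
    (integrableOn_Ioi_cpow_of_lt (by simpa using hs) zero_lt_one).const_mul c
  have hsum : ∫ t in Ioi (1 : ℝ), (∑ k ∈ Finset.Icc 1 ⌊t⌋₊, f k) * (t : ℂ) ^ (-(s + 1)) =
      (∫ t in Ioi (1 : ℝ), (t : ℂ) ^ (-s - 1) * ((∑ k ∈ Finset.Icc 1 ⌊t⌋₊, f k) - c * t)) +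
        ∫ t in Ioi (1 : ℝ), c * (t : ℂ) ^ (-s) := by
    rw [← integral_add hconv hlin]
    refine setIntegral_congr_fun measurableSet_Ioi fun t ht => ?_
    have ht0 : (t : ℂ) ≠ 0 := ofReal_ne_zero.2 (lt_trans zero_lt_one ht).ne'
    have h1 : (t : ℂ) ^ (-s) = (t : ℂ) ^ (-s - 1) * t := by
      rw [cpow_sub _ _ ht0, cpow_one, div_mul_cancel₀ _ ht0]
    have h2 : -(s + 1) = -s - 1 := by ring
    simp only [h1, h2]
    ring
  rw [hsum, integral_const_mul, integral_Ioi_cpow_of_lt (by simpa using hs) zero_lt_one, ofReal_one,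
    one_cpow]
  have : -s + 1 ≠ 0 := fun h => hs1 (by linear_combination -h)
  have h3 : (-1 : ℂ) / (-s + 1) = 1 / (s - 1) := by
    rw [div_eq_div_iff this hs1]
    ring
  rw [h3]
  ring

end sumError

lemma isPreconnected_re_gt (α : ℝ) : IsPreconnected {s : ℂ | α < s.re} :=
  (convex_halfSpace_re_gt α).isPreconnected

/-- Two functions holomorphic on `0 < Re s` which agree on `1 < Re s` are equal. -/
lemma eq_of_eq_of_one_lt_re {F G : ℂ → ℂ} (hF : ∀ s : ℂ, 0 < s.re → DifferentiableAt ℂ F s)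
    (hG : ∀ s : ℂ, 0 < s.re → DifferentiableAt ℂ G s) (h : ∀ s : ℂ, 1 < s.re → F s = G s)
    {s : ℂ} (hs : 0 < s.re) : F s = G s := by
  have hopen : ∀ α : ℝ, IsOpen {s : ℂ | α < s.re} :=
    fun α => isOpen_lt continuous_const continuous_re
  have hF' : AnalyticOnNhd ℂ F {s : ℂ | 0 < s.re} :=
    DifferentiableOn.analyticOnNhd (fun s hs => (hF s hs).differentiableWithinAt) (hopen 0)
  have hG' : AnalyticOnNhd ℂ G {s : ℂ | 0 < s.re} :=
    DifferentiableOn.analyticOnNhd (fun s hs => (hG s hs).differentiableWithinAt) (hopen 0)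
  refine hF'.eqOn_of_preconnected_of_eventuallyEq hG' (isPreconnected_re_gt 0) (z₀ := 2)
    (by simp) ?_ hs
  filter_upwards [(hopen 1).mem_nhds (by simp : (2 : ℂ) ∈ {s : ℂ | 1 < s.re})] with s hs
    using h s hs

lemma sum_Icc_one_eq_sum_range (f : ℕ → ℂ) (n : ℕ) :
    ∑ k ∈ Finset.Icc 1 n, f k = (∑ k ∈ Finset.range (n + 1), f k) - f 0 := by
  rw [Finset.range_eq_Ico, Finset.sum_eq_sum_Ico_succ_bot (by lia), add_sub_cancel_left]
  rfl

section LFunction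

variable {N : ℕ} [NeZero N]

lemma norm_sum_range_le_of_ne_one {χ : DirichletCharacter ℂ N} (hχ : χ ≠ 1) (n : ℕ) :
    ‖∑ k ∈ Finset.range n, χ k‖ ≤ N := by
  induction n using Nat.strong_induction_on with
  | _ n ih =>
  rcases lt_or_ge n N with h | h
  · refine (norm_sum_le _ _).trans ?_
    refine (Finset.sum_le_sum fun (k : ℕ) _ => χ.norm_le_one (k : ZMod N)).trans ?_
    simpa using h.le
  · obtain ⟨m, rfl⟩ := Nat.exists_eq_add_of_le h
    have hN : 0 < N := NeZero.pos N
    have h0 : ∑ k ∈ Finset.range N, χ k = 0 := by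
      rw [← MulChar.sum_eq_zero_of_ne_one hχ]
      refine Finset.sum_nbij' (fun k => (k : ZMod N)) ZMod.val (by simp) ?_ ?_ (by simp) (by simp)
      · exact fun a _ => Finset.mem_range.2 (ZMod.val_lt a)
      · exact fun k hk => ZMod.val_cast_of_lt (Finset.mem_range.1 hk)
    rw [Finset.sum_range_add, h0, zero_add]
    simpa using ih m (by lia)

lemma sumError_bound_of_ne_one {χ : DirichletCharacter ℂ N} (hχ : χ ≠ 1) (t : ℝ) :
    ‖sumError (fun n : ℕ => χ n) 0 t‖ ≤ N := by
  rw [sumError]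
  refine (norm_indicator_le_norm_self _ _).trans ?_
  rcases eq_or_ne N 1 with rfl | hN
  · exact absurd (Subsingleton.elim _ _) hχ
  · have h0 : χ ((0 : ℕ) : ZMod N) = 0 := by
      have : Fact (1 < N) := ⟨by have := NeZero.pos N; lia⟩
      rw [Nat.cast_zero]
      exact χ.map_nonunit not_isUnit_zero
    rw [sum_Icc_one_eq_sum_range, h0, sub_zero, zero_mul, sub_zero]
    exact norm_sum_range_le_of_ne_one hχ _

lemma sumError_bound_one (t : ℝ) : ‖sumError 1 1 t‖ ≤ 1 := by
  rw [sumError]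
  by_cases ht : t ∈ Ioi (1 : ℝ)
  · have ht0 : 0 ≤ t := zero_le_one.trans (mem_Ioi.1 ht).le
    rw [indicator_of_mem ht]
    simp only [Pi.one_apply, Finset.sum_const, Nat.card_Icc, Nat.add_sub_cancel, nsmul_eq_mul,
      mul_one, one_mul]
    rw [norm_sub_rev, ← ofReal_natCast, ← ofReal_sub, norm_real, Real.norm_of_nonneg
      (sub_nonneg.2 (Nat.floor_le ht0))]
    linarith [Nat.lt_floor_add_one t]
  · simp [indicator_of_notMem ht]

lemma norm_LFunction_le {χ : DirichletCharacter ℂ N} (hχ : χ ≠ 1) {s : ℂ} (hs : 1 / 2 < s.re) :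
    ‖χ.LFunction s‖ ≤ 2 * N * ‖s‖ := by
  have hB := sumError_bound_of_ne_one hχ
  have h : χ.LFunction s = s * mellin (sumError (fun n : ℕ => χ n) 0) (-s) := by
    refine eq_of_eq_of_one_lt_re (G := fun s => s * mellin (sumError (fun n : ℕ => χ n) 0) (-s))
      (fun s _ => DirichletCharacter.differentiable_LFunction hχ s) (fun s hs => ?_)
      (fun s hs => ?_) (by linarith)
    · exact differentiableAt_fun_id.mul
        (DifferentiableAt.comp s (g := mellin (sumError (fun n : ℕ => χ n) 0))
        (differentiableAt_mellin_sumError hB (by simpa using hs)) differentiableAt_fun_id.neg)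
    · rw [χ.LFunction_eq_LSeries hs, LSeries_eq_mellin_sumError hB hs
        (χ.LSeriesSummable_of_one_lt_re hs), zero_mul, zero_div, zero_add]
  have h2 := norm_mellin_sumError_le hB (s := -s) (by simp; linarith)
  rw [neg_re, neg_neg] at h2
  have h3 : (N : ℝ) / s.re ≤ 2 * N := by
    rw [div_le_iff₀ (by linarith)]
    nlinarith [Nat.cast_nonneg (α := ℝ) N]
  rw [h, norm_mul, mul_comm]
  gcongr
  exact h2.trans h3

lemma norm_sub_one_mul_riemannZeta_le {s : ℂ} (hs : 1 / 2 < s.re) (hs1 : s ≠ 1) :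
    ‖(s - 1) * riemannZeta s‖ ≤ ‖s‖ + 2 * ‖s‖ * ‖s - 1‖ := by
  have hB := sumError_bound_one
  have h : DirichletCharacter.LFunctionTrivChar₁ 1 s =
      s + (s - 1) * (s * mellin (sumError 1 1) (-s)) := by
    refine eq_of_eq_of_one_lt_re (G := fun s => s + (s - 1) * (s * mellin (sumError 1 1) (-s)))
      (fun s _ => DirichletCharacter.differentiable_LFunctionTrivChar₁ 1 s) (fun s hs => ?_)
      (fun s hs => ?_) (by linarith)
    · exact differentiableAt_fun_id.add ((differentiableAt_fun_id.sub_const 1).mul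
        (differentiableAt_fun_id.mul (DifferentiableAt.comp s (g := mellin (sumError 1 1))
        (differentiableAt_mellin_sumError hB (by simpa using hs)) differentiableAt_fun_id.neg)))
    · have hs1 : s ≠ 1 := fun h => by simp [h] at hs
      have hs1' : s - 1 ≠ 0 := sub_ne_zero.2 hs1
      rw [DirichletCharacter.LFunctionTrivChar₁, Function.update_of_ne hs1]
      simp only [DirichletCharacter.LFunctionTrivChar, DirichletCharacter.LFunction_modOne_eq]
      rw [← LSeries_one_eq_riemannZeta hs, LSeries_eq_mellin_sumError hB hs
        (LSeriesSummable_one_iff.2 hs)]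
      field_simp
  have h2 := norm_mellin_sumError_le hB (s := -s) (by simp; linarith)
  rw [neg_re, neg_neg] at h2
  have h3 : 1 / s.re ≤ 2 := by
    rw [div_le_iff₀ (by linarith)]
    linarith
  rw [DirichletCharacter.LFunctionTrivChar₁, Function.update_of_ne hs1] at h
  simp only [DirichletCharacter.LFunctionTrivChar, DirichletCharacter.LFunction_modOne_eq] at h
  rw [h]
  refine (norm_add_le _ _).trans ?_
  rw [norm_mul, norm_mul]
  have := h2.trans h3
  nlinarith [mul_nonneg (norm_nonneg s) (norm_nonneg (s - 1)),
    mul_le_mul_of_nonneg_left this (mul_nonneg (norm_nonneg s) (norm_nonneg (s - 1)))]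

lemma one_le_norm_add_one {s : ℂ} (hs : 0 < s.re) : 1 ≤ ‖s + 1‖ := by
  have := (le_abs_self _).trans (abs_re_le_norm (s + 1))
  rw [add_re, one_re] at this
  linarith

lemma norm_le_norm_add_one {s : ℂ} (hs : 0 < s.re) : ‖s‖ ≤ ‖s + 1‖ := by
  rw [← sq_le_sq₀ (norm_nonneg _) (norm_nonneg _), ← normSq_eq_norm_sq, ← normSq_eq_norm_sq,
    normSq_apply, normSq_apply]
  simp
  nlinarith

lemma norm_sub_one_le_norm_add_one {s : ℂ} (hs : 0 < s.re) : ‖s - 1‖ ≤ ‖s + 1‖ := by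
  rw [← sq_le_sq₀ (norm_nonneg _) (norm_nonneg _), ← normSq_eq_norm_sq, ← normSq_eq_norm_sq,
    normSq_apply, normSq_apply]
  simp
  nlinarith

lemma norm_LFunction_le_sq {χ : DirichletCharacter ℂ N} (hχ : χ ≠ 1) {s : ℂ} (hs : 1 / 2 < s.re) :
    ‖χ.LFunction s‖ ≤ 3 * N * ‖s + 1‖ ^ 2 := by
  have h1 := norm_LFunction_le hχ hs
  have h2 := norm_le_norm_add_one (s := s) (by linarith)
  have h3 := one_le_norm_add_one (s := s) (by linarith)
  have h4 : ‖s‖ ≤ ‖s + 1‖ ^ 2 := by nlinarith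
  calc _ ≤ 2 * N * ‖s‖ := h1
    _ ≤ 3 * N * ‖s + 1‖ ^ 2 := by gcongr; norm_num

lemma norm_prod_primeFactors_le {z : ℕ → ℂ} (hz : ∀ p, ‖z p‖ ≤ 1) :
    ‖∏ p ∈ N.primeFactors, (1 - z p)‖ ≤ N := by
  rw [norm_prod]
  calc ∏ p ∈ N.primeFactors, ‖1 - z p‖ ≤ ∏ p ∈ N.primeFactors, (p : ℝ) := by
        refine Finset.prod_le_prod (fun _ _ => norm_nonneg _) fun p hp => ?_
        have h2 : (2 : ℝ) ≤ p := by exact_mod_cast (Nat.prime_of_mem_primeFactors hp).two_le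
        refine (norm_sub_le _ _).trans ?_
        rw [norm_one]
        linarith [hz p]
    _ ≤ N := by
        rw [← Nat.cast_prod]
        exact_mod_cast Nat.le_of_dvd (NeZero.pos N) (Nat.prod_primeFactors_dvd N)

lemma norm_LFunctionTrivChar₁_le_sq {s : ℂ} (hs : 1 / 2 < s.re) :
    ‖DirichletCharacter.LFunctionTrivChar₁ N s‖ ≤ 3 * N * ‖s + 1‖ ^ 2 := by
  have h3 := one_le_norm_add_one (s := s) (by linarith)
  have hprod : ∀ {z : ℕ → ℂ}, (∀ p, ‖z p‖ ≤ 1) → ‖∏ p ∈ N.primeFactors, (1 - z p)‖ ≤ N :=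
    norm_prod_primeFactors_le
  by_cases hs1 : s = 1
  · subst hs1
    rw [DirichletCharacter.LFunctionTrivChar₁, Function.update_self]
    refine (hprod fun p => ?_).trans ?_
    · rw [norm_inv, norm_natCast]
      exact Nat.cast_inv_le_one p
    · nlinarith [Nat.cast_nonneg (α := ℝ) N, one_le_pow₀ h3 (n := 2)]
  · rw [DirichletCharacter.LFunctionTrivChar₁, Function.update_of_ne hs1,
      DirichletCharacter.LFunctionTrivChar_eq_mul_riemannZeta hs1, mul_left_comm, norm_mul]
    have h1 := norm_sub_one_mul_riemannZeta_le hs hs1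
    have h2 := norm_le_norm_add_one (s := s) (by linarith)
    have h4 := norm_sub_one_le_norm_add_one (s := s) (by linarith)
    have h5 : ‖(s - 1) * riemannZeta s‖ ≤ 3 * ‖s + 1‖ ^ 2 := by
      nlinarith [mul_le_mul h2 h4 (norm_nonneg _) (norm_nonneg _)]
    have h6 : ‖∏ p ∈ N.primeFactors, (1 - (p : ℂ) ^ (-s))‖ ≤ N := by
      refine hprod fun p => ?_
      rcases Nat.eq_zero_or_pos p with rfl | hp
      · rw [Nat.cast_zero, zero_cpow (by intro h; rw [neg_eq_zero] at h; simp [h] at hs; linarith)]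
        simp
      · rw [norm_natCast_cpow_of_pos hp]
        exact Real.rpow_le_one_of_one_le_of_nonpos (by exact_mod_cast hp) (by simp; linarith)
    calc _ ≤ N * (3 * ‖s + 1‖ ^ 2) := mul_le_mul h6 h5 (norm_nonneg _) (Nat.cast_nonneg _)
      _ = _ := by ring

lemma one_third_le_norm_LFunction (χ : DirichletCharacter ℂ N) {s : ℂ} (hs : 2 ≤ s.re) :
    1 / 3 ≤ ‖χ.LFunction s‖ := by
  have hs1 : 1 < s.re := by linarith
  rw [χ.LFunction_eq_LSeries hs1]
  have hsum : Summable (LSeries.term (fun n : ℕ => χ n) s) := χ.LSeriesSummable_of_one_lt_re hs1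
  have hz := hasSum_zeta_two
  have h1 : LSeries (fun n : ℕ => χ n) s = 1 + ∑' n, LSeries.term (fun n : ℕ => χ n) s (n + 2) := by
    rw [LSeries, ← hsum.sum_add_tsum_nat_add 2]
    simp [Finset.sum_range_succ]
  have h2 : ∑' n : ℕ, 1 / ((n + 2 : ℕ) : ℝ) ^ 2 = Real.pi ^ 2 / 6 - 1 := by
    have := hz.summable.sum_add_tsum_nat_add 2
    rw [hz.tsum_eq] at this
    rw [← this]
    simp [Finset.sum_range_succ]
  have h3 : ‖∑' n, LSeries.term (fun n : ℕ => χ n) s (n + 2)‖ ≤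
      ∑' n : ℕ, 1 / ((n + 2 : ℕ) : ℝ) ^ 2 := by
    refine tsum_of_norm_bounded ((summable_nat_add_iff 2).2 hz.summable).hasSum fun n => ?_
    have hn : (1 : ℝ) ≤ (n + 2 : ℕ) := by exact_mod_cast (by lia)
    rw [LSeries.norm_term_eq, if_neg (by lia)]
    refine div_le_div₀ zero_le_one (χ.norm_le_one _) (by positivity) ?_
    rw [← Real.rpow_natCast]
    exact Real.rpow_le_rpow_of_exponent_le hn (by exact_mod_cast hs)
  have h4 : Real.pi ^ 2 ≤ 10 := by nlinarith [Real.pi_lt_d2, Real.pi_pos]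
  have h5 := norm_sub_le (LSeries (fun n : ℕ => χ n) s)
    (∑' n, LSeries.term (fun n : ℕ => χ n) s (n + 2))
  rw [h1, add_sub_cancel_right, norm_one] at h5
  rw [h1]
  linarith

lemma one_third_le_norm_LFunctionTrivChar₁ {s : ℂ} (hs : 2 ≤ s.re) :
    1 / 3 ≤ ‖DirichletCharacter.LFunctionTrivChar₁ N s‖ := by
  have hs1 : s ≠ 1 := fun h => by
    norm_num [h] at hs
  rw [DirichletCharacter.LFunctionTrivChar₁, Function.update_of_ne hs1, norm_mul]
  have h1 := one_third_le_norm_LFunction (1 : DirichletCharacter ℂ N) hs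
  have h2 : 1 ≤ ‖s - 1‖ := by
    have := (le_abs_self _).trans (abs_re_le_norm (s - 1))
    rw [sub_re, one_re] at this
    linarith
  rw [DirichletCharacter.LFunctionTrivChar]
  nlinarith

lemma LFunction_ne_zero_of_erh (erh : ExtendedRiemannHypothesis) (χ : DirichletCharacter ℂ N)
    {s : ℂ} (hs : 1 / 2 < s.re) (h1 : χ ≠ 1 ∨ s ≠ 1) : χ.LFunction s ≠ 0 := by
  rcases lt_or_ge s.re 1 with h | h
  · exact fun h0 => hs.ne' (erh N χ s (by linarith) h h0)
  · exact χ.LFunction_ne_zero_of_one_le_re h1 h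

lemma LFunctionTrivChar₁_ne_zero_of_erh (erh : ExtendedRiemannHypothesis) {s : ℂ}
    (hs : 1 / 2 < s.re) : DirichletCharacter.LFunctionTrivChar₁ N s ≠ 0 := by
  by_cases hs1 : s = 1
  · rw [hs1]
    exact DirichletCharacter.LFunctionTrivChar₁_apply_one_ne_zero N
  · rw [DirichletCharacter.LFunctionTrivChar₁, Function.update_of_ne hs1]
    exact mul_ne_zero (sub_ne_zero.2 hs1) (LFunction_ne_zero_of_erh erh 1 hs (Or.inr hs1))

end LFunction

section logDeriv

variable {F : ℂ → ℂ} {K : ℝ}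

/-- Normalisation of a function of quadratic growth. -/
noncomputable def normalize (F : ℂ → ℂ) (K : ℝ) (s : ℂ) : ℂ := F s / (K * (s + 1) ^ 2)

lemma add_one_ne_zero_of_re {s : ℂ} (hs : 0 < s.re) : s + 1 ≠ 0 :=
  norm_pos_iff.1 (zero_lt_one.trans_le (one_le_norm_add_one hs))

lemma differentiableAt_normalize (hK : 1 ≤ K)
    (hF : ∀ s : ℂ, 1 / 2 < s.re → DifferentiableAt ℂ F s)
    {s : ℂ} (hs : 1 / 2 < s.re) :
    DifferentiableAt ℂ (normalize F K) s := by
  have h1 : s + 1 ≠ 0 := add_one_ne_zero_of_re (by linarith)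
  have h2 : (K : ℂ) ≠ 0 := ofReal_ne_zero.2 (by linarith)
  exact (hF s hs).div (by fun_prop) (mul_ne_zero h2 (pow_ne_zero _ h1))

lemma normalize_ne_zero (hK : 1 ≤ K)
    (h0 : ∀ s : ℂ, 1 / 2 < s.re → F s ≠ 0)
    {s : ℂ} (hs : 1 / 2 < s.re) : normalize F K s ≠ 0 := by
  have h1 : s + 1 ≠ 0 := add_one_ne_zero_of_re (by linarith)
  have h2 : (K : ℂ) ≠ 0 := ofReal_ne_zero.2 (by linarith)
  exact div_ne_zero (h0 s hs) (mul_ne_zero h2 (pow_ne_zero _ h1))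

lemma norm_normalize (hK : 1 ≤ K) (s : ℂ) : ‖normalize F K s‖ = ‖F s‖ / (K * ‖s + 1‖ ^ 2) := by
  rw [normalize, norm_div, norm_mul, norm_pow, norm_real, Real.norm_of_nonneg (by linarith)]

lemma norm_normalize_le_one (hK : 1 ≤ K)
    (hle : ∀ s : ℂ, 1 / 2 < s.re → ‖F s‖ ≤ K * ‖s + 1‖ ^ 2)
    {s : ℂ} (hs : 1 / 2 < s.re) : ‖normalize F K s‖ ≤ 1 := by
  rw [norm_normalize hK]
  exact div_le_one_of_le₀ (hle s hs) (by positivity)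

lemma neg_log_norm_normalize_le (hK : 1 ≤ K)
    (hge : ∀ s : ℂ, 2 ≤ s.re → 1 / 3 ≤ ‖F s‖)
    {s : ℂ} (hs : 2 ≤ s.re) :
    -Real.log ‖normalize F K s‖ ≤ Real.log K + Real.log (3 * ‖s + 1‖ ^ 2) := by
  have h1 : 0 < ‖s + 1‖ := zero_lt_one.trans_le (one_le_norm_add_one (by linarith))
  have h2 := hge s hs
  rw [← Real.log_inv, norm_normalize hK, inv_div, ← Real.log_mul (by linarith) (by positivity)]
  refine Real.log_le_log (by positivity) ?_
  rw [div_le_iff₀ (by linarith)]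
  have : 0 ≤ K * ‖s + 1‖ ^ 2 := by positivity
  nlinarith

lemma logDeriv_eq_normalize (hK : 1 ≤ K)
    (hF : ∀ s : ℂ, 1 / 2 < s.re → DifferentiableAt ℂ F s)
    (h0 : ∀ s : ℂ, 1 / 2 < s.re → F s ≠ 0)
    {s : ℂ} (hs : 1 / 2 < s.re) :
    deriv F s / F s = deriv (normalize F K) s / normalize F K s + 2 / (s + 1) := by
  have h1 : s + 1 ≠ 0 := add_one_ne_zero_of_re (by linarith)
  have h2 : (K : ℂ) ≠ 0 := ofReal_ne_zero.2 (by linarith)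
  have h3 := h0 s hs
  have hd : HasDerivAt (fun s : ℂ => (K : ℂ) * (s + 1) ^ 2) (K * (2 * (s + 1))) s := by
    have := (((hasDerivAt_id s).add_const 1).pow 2).const_mul (K : ℂ)
    simpa using this
  have h4 := ((hF s hs).hasDerivAt.div hd (mul_ne_zero h2 (pow_ne_zero _ h1))).deriv
  have h5 : deriv (normalize F K) s = _ := h4
  rw [h5, normalize]
  field_simp
  ring

lemma norm_logDeriv_le (hK : 1 ≤ K)
    (hF : ∀ s : ℂ, 1 / 2 < s.re → DifferentiableAt ℂ F s)
    (h0 : ∀ s : ℂ, 1 / 2 < s.re → F s ≠ 0)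
    (hle : ∀ s : ℂ, 1 / 2 < s.re → ‖F s‖ ≤ K * ‖s + 1‖ ^ 2)
    {η : ℝ} (hη : 0 < η) {s : ℂ} (hs : 1 / 2 + η ≤ s.re) :
    ‖deriv F s / F s‖ ≤ 6 / η * (-Real.log ‖normalize F K s‖) + 2 := by
  have hs' : 1 / 2 < s.re := by linarith
  have hball : ∀ z ∈ ball s η, 1 / 2 < z.re := fun z hz => by
    have h1 := (abs_le.1 (abs_re_le_norm (z - s))).1
    rw [mem_ball, dist_eq_norm] at hz
    rw [sub_re] at h1
    linarith
  have h1 := norm_logDeriv_le_of_norm_le_one hη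
    (fun z hz => (differentiableAt_normalize hK hF (hball z hz)).differentiableWithinAt)
    (fun z hz => normalize_ne_zero hK h0 (hball z hz))
    (fun z hz => norm_normalize_le_one hK hle (hball z hz))
  rw [logDeriv_eq_normalize hK hF h0 hs']
  refine (norm_add_le _ _).trans (add_le_add (h1.trans_eq (by ring)) ?_)
  rw [norm_div, div_le_iff₀ (zero_lt_one.trans_le (one_le_norm_add_one (by linarith)))]
  have := one_le_norm_add_one (s := s) (by linarith)
  simp
  linarith

lemma neg_log_norm_normalize_strip_le (hK : 1 ≤ K)
    (hF : ∀ s : ℂ, 1 / 2 < s.re → DifferentiableAt ℂ F s)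
    (h0 : ∀ s : ℂ, 1 / 2 < s.re → F s ≠ 0)
    (hle : ∀ s : ℂ, 1 / 2 < s.re → ‖F s‖ ≤ K * ‖s + 1‖ ^ 2)
    (hge : ∀ s : ℂ, 2 ≤ s.re → 1 / 3 ≤ ‖F s‖)
    {η σ : ℝ} (hη : 0 < η) (h1 : 1 / 2 + η ≤ σ) (h2 : σ ≤ 2)
    (t : ℝ) : -Real.log ‖normalize F K (σ + t * I)‖ ≤ 81 * K / η * (1 + t ^ 2) := by
  have hball : ∀ z ∈ ball (2 + t * I : ℂ) (3 / 2), 1 / 2 < z.re := fun z hz => by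
    have h1 := (abs_le.1 (abs_re_le_norm (z - (2 + t * I)))).1
    rw [mem_ball, dist_eq_norm] at hz
    simp at h1
    linarith
  have hd : ‖(σ + t * I : ℂ) - (2 + t * I)‖ = 2 - σ := by
    rw [add_sub_add_right_eq_sub, norm_sub_rev, ← ofReal_ofNat, ← ofReal_sub, norm_real,
      Real.norm_of_nonneg (by linarith)]
  have h3 := neg_log_norm_le_of_norm_le_one (R := 3 / 2)
    (fun z hz => (differentiableAt_normalize hK hF (hball z hz)).differentiableWithinAt)
    (fun z hz => normalize_ne_zero hK h0 (hball z hz))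
    (fun z hz => norm_normalize_le_one hK hle (hball z hz))
    (z := σ + t * I) (by rw [mem_ball, dist_eq_norm, hd]; linarith)
  rw [hd] at h3
  have hre : (2 + t * I : ℂ).re = 2 := by simp
  have h4 := neg_log_norm_normalize_le hK hge hre.ge
  have h5 : ‖(2 + t * I : ℂ) + 1‖ ^ 2 = 9 + t ^ 2 := by
    rw [← normSq_eq_norm_sq, normSq_apply]
    simp
    ring
  rw [h5, ← Real.log_mul (by linarith) (by positivity)] at h4
  have h6 := Real.log_le_sub_one_of_pos (x := K * (3 * (9 + t ^ 2))) (by positivity)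
  have h7 : (3 / 2 + (2 - σ)) / (3 / 2 - (2 - σ)) ≤ 3 / η := by
    rw [div_le_div_iff₀ (by linarith) hη]
    nlinarith
  have h8 : 0 ≤ -Real.log ‖normalize F K (2 + t * I)‖ := by
    rw [neg_nonneg]
    exact Real.log_nonpos (norm_nonneg _) (norm_normalize_le_one hK hle (by rw [hre]; norm_num))
  calc _ ≤ _ := h3
    _ ≤ (27 * K * (1 + t ^ 2)) * (3 / η) := by
        refine mul_le_mul (h4.trans ?_) h7 ?_ (by positivity)
        · nlinarith [sq_nonneg t]
        · exact div_nonneg (by linarith) (by linarith)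
    _ = _ := by ring

lemma lintegral_logDeriv_le (hK : 1 ≤ K)
    (hF : ∀ s : ℂ, 1 / 2 < s.re → DifferentiableAt ℂ F s)
    (h0 : ∀ s : ℂ, 1 / 2 < s.re → F s ≠ 0)
    (hle : ∀ s : ℂ, 1 / 2 < s.re → ‖F s‖ ≤ K * ‖s + 1‖ ^ 2)
    (hge : ∀ s : ℂ, 2 ≤ s.re → 1 / 3 ≤ ‖F s‖)
    {η A : ℝ} (hη : 0 < η) (hη1 : η ≤ 1) (hA : 0 ≤ A) {g : ℝ → ℂ}
    (hg : ∀ t, ‖g t‖ ≤ A / (1 + t ^ 2) ^ 2 * ‖deriv F (((1 / 2 + η : ℝ) : ℂ) + t * I) /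
      F (((1 / 2 + η : ℝ) : ℂ) + t * I)‖) :
    ‖∫ t, g t‖ ≤ 722 * Real.pi * A * (Real.log K + 1) / η := by
  set σ : ℝ := 1 / 2 + η with hσ
  have hB := lintegral_neg_log_norm_le (F := normalize F K) (α := 1 / 2) (σ := σ) (by linarith)
    (fun s hs => (differentiableAt_normalize hK hF hs).differentiableWithinAt)
    (fun s hs => normalize_ne_zero hK h0 hs)
    (fun s hs => norm_normalize_le_one hK hle hs)
  have hlog : -Real.log ‖normalize F K (σ + 2)‖ ≤ Real.log K + 60 := by
    have hre : 2 ≤ (σ + 2 : ℂ).re := by simp; linarith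
    refine (neg_log_norm_normalize_le hK hge hre).trans ?_
    have hn : ‖(σ + 2 : ℂ) + 1‖ = σ + 3 := by
      rw [add_assoc, ← ofReal_ofNat, ← ofReal_one, ← ofReal_add, ← ofReal_add, norm_real,
        Real.norm_of_nonneg (by linarith)]
      ring
    rw [hn]
    have := Real.log_le_sub_one_of_pos (x := 3 * (σ + 3) ^ 2) (by positivity)
    nlinarith
  have hlogK : 0 ≤ Real.log K := Real.log_nonneg hK
  have hpi := Real.pi_pos
  have hbd : ∫⁻ t, ‖g t‖ₑ ≤ ENNReal.ofReal (722 * Real.pi * A * (Real.log K + 1) / η) := by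
    calc ∫⁻ t, ‖g t‖ₑ
        ≤ ∫⁻ t : ℝ, (ENNReal.ofReal (A * (6 / η)) * (ENNReal.ofReal (4 / (4 + t ^ 2)) *
            ENNReal.ofReal (-Real.log ‖normalize F K (σ + t * I)‖)) +
              ENNReal.ofReal (A * 2 / (1 + t ^ 2))) := by
          refine lintegral_mono fun t => ?_
          have hre : 1 / 2 + η ≤ (σ + t * I : ℂ).re := by simp [hσ]
          have hv : 0 ≤ -Real.log ‖normalize F K (σ + t * I)‖ := by
            rw [neg_nonneg]
            exact Real.log_nonpos (norm_nonneg _) (norm_normalize_le_one hK hle (by linarith))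
          rw [← ENNReal.ofReal_mul (by positivity), ← ENNReal.ofReal_mul (by positivity),
            ← ENNReal.ofReal_add (by positivity) (by positivity), ← ofReal_norm]
          refine ENNReal.ofReal_le_ofReal ((hg t).trans ?_)
          have h1 := norm_logDeriv_le hK hF h0 hle hη hre
          have h2 : 1 / (1 + t ^ 2) ^ 2 ≤ 4 / (4 + t ^ 2) := by
            rw [div_le_div_iff₀ (by positivity) (by positivity)]
            nlinarith [sq_nonneg t, sq_nonneg (t ^ 2)]
          have h3 : 1 / (1 + t ^ 2) ^ 2 ≤ 1 / (1 + t ^ 2) := by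
            rw [div_le_div_iff₀ (by positivity) (by positivity)]
            nlinarith [sq_nonneg t, sq_nonneg (t ^ 2)]
          set v := -Real.log ‖normalize F K (σ + t * I)‖
          calc _ ≤ A / (1 + t ^ 2) ^ 2 * (6 / η * v + 2) := by gcongr
            _ = A * (6 / η) * (1 / (1 + t ^ 2) ^ 2 * v) + A * 2 * (1 / (1 + t ^ 2) ^ 2) := by ring
            _ ≤ A * (6 / η) * (4 / (4 + t ^ 2) * v) + A * 2 * (1 / (1 + t ^ 2)) := by gcongr
            _ = _ := by ring
      _ = ENNReal.ofReal (A * (6 / η)) * (∫⁻ t : ℝ, ENNReal.ofReal (4 / (4 + t ^ 2)) *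
            ENNReal.ofReal (-Real.log ‖normalize F K (σ + t * I)‖)) +
              ∫⁻ t : ℝ, ENNReal.ofReal (A * 2 / (1 + t ^ 2)) := by
          rw [lintegral_add_right _ (by fun_prop), lintegral_const_mul' _ _ ENNReal.ofReal_ne_top]
      _ ≤ ENNReal.ofReal (A * (6 / η)) * ENNReal.ofReal (2 * Real.pi * (Real.log K + 60)) +
            ENNReal.ofReal (A * 2 * Real.pi) := by
          gcongr
          · refine hB.trans (ENNReal.ofReal_le_ofReal ?_)
            gcongr
          · rw [← ofReal_integral_eq_lintegral_ofReal (integrable_const_div_one_add_sq _)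
              (ae_of_all _ fun t => by positivity)]
            simp_rw [div_eq_mul_inv]
            rw [integral_const_mul, integral_univ_inv_one_add_sq]
      _ ≤ _ := by
          rw [← ENNReal.ofReal_mul (by positivity), ← ENNReal.ofReal_add (by positivity)
            (by positivity)]
          refine ENNReal.ofReal_le_ofReal ?_
          rw [le_div_iff₀ hη]
          have h1 : (A * (6 / η) * (2 * Real.pi * (Real.log K + 60)) + A * 2 * Real.pi) * η =
              Real.pi * A * (12 * (Real.log K + 60) + 2 * η) := by
            field_simp
            ring
          rw [h1, mul_assoc 722, mul_assoc 722, mul_left_comm]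
          gcongr
          linarith
  have h := (enorm_integral_le_lintegral_enorm g).trans hbd
  rw [← ofReal_norm] at h
  exact (ENNReal.ofReal_le_ofReal_iff (by positivity)).1 h

end logDeriv

/-- Bound for a smoothed explicit formula of a function without zeros in `1/2 < Re s`. -/
theorem IsWeight.exists_norm_integral_logDeriv_le {f : ℝ → ℂ} (hf : IsWeight f) :
    ∃ C : ℝ, 0 ≤ C ∧ ∀ (F : ℂ → ℂ) (K x η : ℝ), 1 ≤ K →
      (∀ s : ℂ, 1 / 2 < s.re → DifferentiableAt ℂ F s) →
      (∀ s : ℂ, 1 / 2 < s.re → F s ≠ 0) →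
      (∀ s : ℂ, 1 / 2 < s.re → ‖F s‖ ≤ K * ‖s + 1‖ ^ 2) →
      (∀ s : ℂ, 2 ≤ s.re → 1 / 3 ≤ ‖F s‖) → 1 ≤ x → 0 < η → η ≤ 1 →
      ‖∫ t : ℝ, deriv F (2 + t * I) / F (2 + t * I) * mellin f (2 + t * I) *
        (x : ℂ) ^ (2 + t * I)‖ ≤ C * x ^ (1 / 2 + η) * (Real.log K + 1) / η := by
  obtain ⟨C, hC0, hC⟩ := hf.exists_norm_mellin_le_div
  refine ⟨722 * Real.pi * C, by positivity, fun F K x η hK hF h0 hle hge hx hη hη1 => ?_⟩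
  have hx0 : 0 < x := by linarith
  have hW : ∀ σ t : ℝ, 1 / 2 ≤ σ → ‖mellin f (σ + t * I)‖ ≤ C / (1 + t ^ 2) ^ 2 := fun σ t h => by
    simpa using hC (σ + t * I) (by simpa using h)
  have hxp : ∀ σ t : ℝ, ‖(x : ℂ) ^ (σ + t * I : ℂ)‖ = x ^ σ := fun σ t => by
    rw [norm_cpow_eq_rpow_re_of_pos hx0]
    simp
  have hshift := integral_vertical_eq (a := 1 / 2 + η) (b := 2)
    (f := fun s => deriv F s / F s * mellin f s * (x : ℂ) ^ s)
    (M := (6 / η * (81 * K / η) + 2) * C * x ^ (2 : ℝ)) (by linarith) ?_ ?_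
  · rw [ofReal_ofNat] at hshift
    rw [← hshift]
    refine (lintegral_logDeriv_le hK hF h0 hle hge hη hη1
      (A := C * x ^ (1 / 2 + η)) (by positivity) fun t => ?_).trans_eq (by ring)
    rw [norm_mul, norm_mul, hxp, mul_assoc, mul_comm]
    refine mul_le_mul_of_nonneg_right ?_ (norm_nonneg _)
    rw [mul_div_right_comm]
    gcongr
    exact hW _ _ (by linarith)
  · intro s hs _
    have hs' : 1 / 2 < s.re := by linarith
    have hopen : IsOpen {s : ℂ | 1 / 2 < s.re} := isOpen_lt continuous_const continuous_re
    have hd : DifferentiableAt ℂ (deriv F) s :=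
      ((DifferentiableOn.deriv (fun z hz => (hF z hz).differentiableWithinAt) hopen) s
        hs').differentiableAt (hopen.mem_nhds hs')
    refine ((hd.div (hF s hs') (h0 s hs')).mul (hf.differentiable_mellin s)).mul ?_
    exact differentiableAt_id.const_cpow (Or.inl (ofReal_ne_zero.2 hx0.ne'))
  · intro σ t h1 h2
    have hre : 1 / 2 + η ≤ (σ + t * I : ℂ).re := by simpa using h1
    have h3 := norm_logDeriv_le hK hF h0 hle hη hre
    have h4 := neg_log_norm_normalize_strip_le hK hF h0 hle hge hη h1 h2 t
    have h5 : ‖deriv F (σ + t * I) / F (σ + t * I)‖ ≤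
        (6 / η * (81 * K / η) + 2) * (1 + t ^ 2) := by
      have h6 : 6 / η * (-Real.log ‖normalize F K (σ + t * I)‖) ≤
          6 / η * (81 * K / η * (1 + t ^ 2)) := by gcongr
      nlinarith [sq_nonneg t]
    rw [norm_mul, norm_mul, hxp]
    calc _ ≤ (6 / η * (81 * K / η) + 2) * (1 + t ^ 2) * (C / (1 + t ^ 2) ^ 2) * x ^ (2 : ℝ) := by
          gcongr
          exact hW _ _ (by linarith)
      _ = _ := by
          field_simp

lemma cpow_neg_mul_cpow {u x : ℝ} (hu : 0 < u) (hx : 0 < x) (s : ℂ) :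
    (u : ℂ) ^ (-s) * (x : ℂ) ^ s = ((u / x : ℝ) : ℂ) ^ (-s) := by
  have hx0 : (x : ℂ) ≠ 0 := ofReal_ne_zero.2 hx.ne'
  have h1 : (u : ℂ) = ((u / x : ℝ) : ℂ) * x := by
    rw [ofReal_div, div_mul_cancel₀ _ hx0]
  conv_lhs => rw [h1, mul_cpow_ofReal_nonneg (div_pos hu hx).le hx.le, mul_assoc,
    ← cpow_add _ _ hx0, neg_add_cancel, cpow_zero, mul_one]

lemma IsWeight.integral_cpow_mellin {f : ℝ → ℂ} (hf : IsWeight f) {u x : ℝ} (hu : 0 < u)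
    (hx : 0 < x) : ∫ t : ℝ, (u : ℂ) ^ (-(2 + t * I)) * mellin f (2 + t * I) *
      (x : ℂ) ^ (2 + t * I) = 2 * Real.pi * f (u / x) := by
  rw [← hf.integral_mellin (div_pos hu hx)]
  congr 1 with t
  rw [← cpow_neg_mul_cpow hu hx]
  ring

lemma IsWeight.continuous_mellin_mul_cpow {f : ℝ → ℂ} (hf : IsWeight f) {x : ℝ} (hx : 0 < x) :
    Continuous fun t : ℝ => mellin f (2 + t * I) * (x : ℂ) ^ (2 + t * I) := by
  refine (hf.differentiable_mellin.continuous.comp (by fun_prop)).mul ?_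
  exact Continuous.const_cpow (by fun_prop) (Or.inl (ofReal_ne_zero.2 hx.ne'))

lemma norm_cpow_two_add {x : ℝ} (hx : 0 < x) (t : ℝ) : ‖(x : ℂ) ^ (2 + t * I : ℂ)‖ = x ^ 2 := by
  rw [norm_cpow_eq_rpow_re_of_pos hx]
  simp

lemma norm_cpow_neg_two_add {x : ℝ} (hx : 0 < x) (t : ℝ) :
    ‖(x : ℂ) ^ (-(2 + t * I) : ℂ)‖ = x ^ (-2 : ℝ) := by
  rw [norm_cpow_eq_rpow_re_of_pos hx]
  simp

lemma IsWeight.integrable_mellin_mul_cpow {f : ℝ → ℂ} (hf : IsWeight f) {x : ℝ} (hx : 0 < x) :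
    Integrable fun t : ℝ => mellin f (2 + t * I) * (x : ℂ) ^ (2 + t * I) := by
  have h := hf.integrable_mellin (σ := 2) (by norm_num)
  rw [ofReal_ofNat] at h
  refine (h.norm.mul_const (x ^ 2)).mono' (hf.continuous_mellin_mul_cpow hx).aestronglyMeasurable
    (ae_of_all _ fun t => ?_)
  rw [norm_mul, norm_cpow_two_add hx]

/-- Mellin inversion for a Dirichlet series. -/
lemma IsWeight.hasSum_mul_div {f : ℝ → ℂ} (hf : IsWeight f) {a : ℕ → ℂ}
    (ha : LSeriesSummable a 2) {x : ℝ} (hx : 0 < x) :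
    HasSum (fun m : ℕ => 2 * Real.pi * (a m * f (m / x)))
      (∫ t : ℝ, LSeries a (2 + t * I) * mellin f (2 + t * I) * (x : ℂ) ^ (2 + t * I)) := by
  have hInt := hf.integrable_mellin_mul_cpow hx
  set g : ℝ → ℂ := fun t => mellin f (2 + t * I) * (x : ℂ) ^ (2 + t * I) with hg
  have hnorm : ∀ (m : ℕ) (t : ℝ), ‖LSeries.term a (2 + t * I) m * g t‖ =
      ‖LSeries.term a 2 m‖ * ‖g t‖ := fun m t => by
    rw [norm_mul, LSeries.norm_term_eq, LSeries.norm_term_eq]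
    simp
  have hmeas : ∀ m : ℕ, Continuous fun t : ℝ => LSeries.term a (2 + t * I) m := fun m => by
    rcases eq_or_ne m 0 with rfl | hm
    · simpa using continuous_const
    · simp only [LSeries.term_of_ne_zero hm]
      have hm0 : (m : ℂ) ≠ 0 := Nat.cast_ne_zero.2 hm
      refine Continuous.div continuous_const (Continuous.const_cpow (by fun_prop) (Or.inl hm0))
        fun t => (by simp [cpow_eq_zero_iff, hm0])
  have hI : ∀ m : ℕ, Integrable fun t : ℝ => LSeries.term a (2 + t * I) m * g t := fun m =>
    (hInt.norm.const_mul ‖LSeries.term a 2 m‖).mono'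
      ((hmeas m).mul (hf.continuous_mellin_mul_cpow hx)).aestronglyMeasurable
      (ae_of_all _ fun t => (hnorm m t).le)
  have h := hasSum_integral_of_summable_integral_norm hI (by
    simp only [hnorm, integral_const_mul]
    exact ha.norm.mul_right _)
  simp only [tsum_mul_right] at h
  convert! h using 1
  · ext m
    rcases eq_or_ne m 0 with rfl | hm
    · simp [hf.2 0 (by norm_num)]
    · have hm0 : (0 : ℝ) < m := by exact_mod_cast Nat.pos_of_ne_zero hm
      rw [mul_left_comm, ← hf.integral_cpow_mellin hm0 hx, ← integral_const_mul]
      congr 1 with t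
      rw [LSeries.term_of_ne_zero hm, cpow_neg, hg, ofReal_natCast]
      ring
  · congr 1 with t
    rw [hg, LSeries]
    ring

lemma IsWeight.integral_div_sub_one {f : ℝ → ℂ} (hf : IsWeight f) {x : ℝ} (hx : 2 < x) :
    ∫ t : ℝ, 1 / ((2 + t * I : ℂ) - 1) * mellin f (2 + t * I) * (x : ℂ) ^ (2 + t * I) =
      2 * Real.pi * (x * ∫ u, f u) := by
  have hx0 : 0 < x := by linarith
  have hInt := hf.integrable_mellin_mul_cpow hx0
  have hcont := hf.continuous_mellin_mul_cpow hx0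
  set g : ℝ → ℂ := fun t => mellin f (2 + t * I) * (x : ℂ) ^ (2 + t * I) with hg
  have hr : IntegrableOn (fun u : ℝ => u ^ (-2 : ℝ)) (Ioi 1) :=
    integrableOn_Ioi_rpow_of_lt (by norm_num) zero_lt_one
  have hprod : Integrable (Function.uncurry fun (t u : ℝ) => (u : ℂ) ^ (-(2 + t * I)) * g t)
      (volume.prod (volume.restrict (Ioi 1))) := by
    refine (hInt.norm.mul_prod hr).mono' ?_ ?_
    · refine Measurable.aestronglyMeasurable ?_
      exact Measurable.mul (by fun_prop) (hcont.measurable.comp measurable_fst)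
    · have h1 : ∀ᵐ z : ℝ × ℝ ∂(volume.prod (volume.restrict (Ioi 1))), z.2 ∈ Ioi (1 : ℝ) :=
        Measure.quasiMeasurePreserving_snd.ae (ae_restrict_mem measurableSet_Ioi)
      filter_upwards [h1] with z hz
      rw [Function.uncurry, norm_mul, norm_cpow_neg_two_add (zero_lt_one.trans hz), mul_comm]
  calc _ = ∫ t : ℝ, ∫ u in Ioi (1 : ℝ), (u : ℂ) ^ (-(2 + t * I)) * g t := by
        congr 1 with t
        rw [integral_mul_const, integral_Ioi_cpow_of_lt (by simp) zero_lt_one, ofReal_one, one_cpow,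
          mul_assoc, hg]
        congr 1
        rw [← neg_div_neg_eq]
        congr 1
        ring
    _ = ∫ u in Ioi (1 : ℝ), ∫ t : ℝ, (u : ℂ) ^ (-(2 + t * I)) * g t :=
        integral_integral_swap hprod
    _ = ∫ u in Ioi (1 : ℝ), 2 * Real.pi * f (u / x) := by
        refine setIntegral_congr_fun measurableSet_Ioi fun u hu => ?_
        rw [← hf.integral_cpow_mellin (zero_lt_one.trans hu) hx0]
        congr 1 with t
        rw [hg]
        ring
    _ = ∫ u, 2 * Real.pi * f (u / x) := by
        refine setIntegral_eq_integral_of_forall_compl_eq_zero fun u hu => ?_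
        rw [hf.2, mul_zero]
        intro h
        have h2 : u ≤ 1 := not_lt.1 hu
        have h3 := h.1
        rw [le_div_iff₀ hx0] at h3
        linarith
    _ = _ := by
        rw [integral_const_mul, Measure.integral_comp_div f x, abs_of_pos hx0, real_smul]

/-- The smoothed Chebyshev function of a Dirichlet character. -/
noncomputable def smoothPsi {N : ℕ} (χ : DirichletCharacter ℂ N) (f : ℝ → ℂ) (x : ℝ) : ℂ :=
  ∑' m : ℕ, χ m * ArithmeticFunction.vonMangoldt m * f (m / x)

lemma rpow_half_add_inv_log {x : ℝ} (hx : 1 < x) :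
    x ^ (1 / 2 + 1 / Real.log x) = Real.exp 1 * Real.sqrt x := by
  have hlog := Real.log_pos hx
  rw [Real.rpow_add (by linarith), ← Real.sqrt_eq_rpow, Real.rpow_def_of_pos (by linarith) (1 / _),
    mul_one_div_cancel hlog.ne', mul_comm]

section smoothPsi

variable {N : ℕ} [NeZero N]

lemma LSeries_twist_vonMangoldt_eq_LFunction (χ : DirichletCharacter ℂ N) {s : ℂ} (hs : 1 < s.re) :
    LSeries ((fun n : ℕ => χ n) * (fun n : ℕ => (ArithmeticFunction.vonMangoldt n : ℂ))) s =
      -deriv χ.LFunction s / χ.LFunction s := by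
  rw [DirichletCharacter.LSeries_twist_vonMangoldt_eq χ hs, χ.LFunction_eq_LSeries hs,
    χ.deriv_LFunction_eq_deriv_LSeries hs]

lemma IsWeight.smoothPsi_eq_integral {f : ℝ → ℂ} (hf : IsWeight f) (χ : DirichletCharacter ℂ N)
    {x : ℝ} (hx : 0 < x) : 2 * Real.pi * smoothPsi χ f x =
      ∫ t : ℝ, -deriv χ.LFunction (2 + t * I) / χ.LFunction (2 + t * I) *
        mellin f (2 + t * I) * (x : ℂ) ^ (2 + t * I) := by
  have h := hf.hasSum_mul_div
    (a := (fun n : ℕ => χ n) * (fun n : ℕ => (ArithmeticFunction.vonMangoldt n : ℂ)))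
    (χ.LSeriesSummable_twist_vonMangoldt (by simp)) hx
  rw [smoothPsi, ← tsum_mul_left]
  refine (h.tsum_eq).trans ?_
  congr 1 with t
  rw [LSeries_twist_vonMangoldt_eq_LFunction χ (by simp)]

lemma integrable_logDeriv_mul (χ : DirichletCharacter ℂ N) {g : ℝ → ℂ} (hg : Integrable g) :
    Integrable fun t : ℝ =>
      -deriv χ.LFunction (2 + t * I) / χ.LFunction (2 + t * I) * g t := by
  have hsum := χ.LSeriesSummable_twist_vonMangoldt (s := 2) (by simp)
  have hre : ∀ t : ℝ, (2 + t * I : ℂ).re = 2 := fun t => by simp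
  have hne : ∀ s : ℂ, 1 < s.re → s ≠ 1 := fun s hs h => by simp [h] at hs
  have hopen : IsOpen {s : ℂ | 1 < s.re} := isOpen_lt continuous_const continuous_re
  have hd : DifferentiableOn ℂ χ.LFunction {s : ℂ | 1 < s.re} := fun s hs =>
    (χ.differentiableAt_LFunction s (Or.inl (hne s hs))).differentiableWithinAt
  have hc : ContinuousOn (fun s => -deriv χ.LFunction s / χ.LFunction s) {s : ℂ | 1 < s.re} :=
    (hd.deriv hopen).continuousOn.neg.div hd.continuousOn fun s hs =>
      χ.LFunction_ne_zero_of_one_le_re (Or.inr (hne s hs)) (le_of_lt hs)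
  refine hg.bdd_mul
    (c := ∑' m, ‖LSeries.term ((fun n : ℕ => χ n) * (fun n : ℕ => (ArithmeticFunction.vonMangoldt n : ℂ)))
      2 m‖)
    (Continuous.aestronglyMeasurable ?_) (ae_of_all _ fun t => ?_)
  · exact hc.comp_continuous (by fun_prop) fun t => by simp
  · rw [← LSeries_twist_vonMangoldt_eq_LFunction χ (by simp)]
    refine tsum_of_norm_bounded hsum.norm.hasSum fun m => le_of_eq ?_
    rw [LSeries.norm_term_eq, LSeries.norm_term_eq]
    simp

lemma integral_logDeriv_LFunctionTrivChar₁ {f : ℝ → ℂ} (hf : IsWeight f) {x : ℝ} (hx : 2 < x) :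
    2 * Real.pi * (smoothPsi (1 : DirichletCharacter ℂ N) f x - x * ∫ u, f u) =
      -∫ t : ℝ, deriv (DirichletCharacter.LFunctionTrivChar₁ N) (2 + t * I) /
        DirichletCharacter.LFunctionTrivChar₁ N (2 + t * I) *
        mellin f (2 + t * I) * (x : ℂ) ^ (2 + t * I) := by
  have hx0 : 0 < x := by linarith
  have hInt := hf.integrable_mellin_mul_cpow hx0
  have hne : ∀ t : ℝ, (2 + t * I : ℂ) ≠ 1 := fun t h => by
    have := congrArg re h
    norm_num at this
  have hI1 := integrable_logDeriv_mul (1 : DirichletCharacter ℂ N) hInt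
  have hI2 : Integrable fun t : ℝ => 1 / ((2 + t * I : ℂ) - 1) *
      (mellin f (2 + t * I) * (x : ℂ) ^ (2 + t * I)) := by
    refine hInt.bdd_mul (c := 1) (Continuous.aestronglyMeasurable ?_) (ae_of_all _ fun t => ?_)
    · exact Continuous.div continuous_const (by fun_prop) fun t => sub_ne_zero.2 (hne t)
    · have h1 := (le_abs_self _).trans (abs_re_le_norm ((2 + t * I : ℂ) - 1))
      have h2 : ((2 + t * I : ℂ) - 1).re = 1 := by
        simp
        norm_num
      rw [norm_div, norm_one]
      exact div_le_one_of_le₀ (h2 ▸ h1) (norm_nonneg _)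
  rw [mul_sub, ← hf.integral_div_sub_one hx, hf.smoothPsi_eq_integral _ hx0]
  simp only [mul_assoc]
  rw [← integral_sub hI1 hI2, ← integral_neg]
  congr 1 with t
  have h1 : (2 + t * I : ℂ) - 1 ≠ 0 := sub_ne_zero.2 (hne t)
  have h2 : DirichletCharacter.LFunctionTrivChar N (2 + t * I) ≠ 0 :=
    DirichletCharacter.LFunction_ne_zero_of_one_le_re _ (Or.inr (hne t)) (by simp)
  rw [DirichletCharacter.deriv_LFunctionTrivChar₁_apply_of_ne_one _ (hne t),
    DirichletCharacter.LFunctionTrivChar₁, Function.update_of_ne (hne t), add_div,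
    mul_div_mul_left _ _ h1, div_mul_cancel_right₀ h2]
  ring

theorem IsWeight.exists_norm_smoothPsi_sub_le (erh : ExtendedRiemannHypothesis) {f : ℝ → ℂ}
    (hf : IsWeight f) : ∃ C : ℝ, 0 ≤ C ∧ ∀ (N : ℕ) [NeZero N] (χ : DirichletCharacter ℂ N) (x : ℝ),
      3 ≤ x → ‖smoothPsi χ f x - if χ = 1 then x * ∫ u, f u else 0‖ ≤
        C * Real.sqrt x * Real.log x * (Real.log (3 * N) + 1) := by
  obtain ⟨C, hC0, hC⟩ := hf.exists_norm_integral_logDeriv_le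
  refine ⟨C * Real.exp 1, by positivity, fun N _ χ x hx => ?_⟩
  have hx0 : 0 < x := by linarith
  have hlog1 : 1 ≤ Real.log x := by
    rw [Real.le_log_iff_exp_le hx0]
    linarith [Real.exp_one_lt_d9]
  have hK : (1 : ℝ) ≤ 3 * N := by
    have : (1 : ℝ) ≤ N := by exact_mod_cast NeZero.one_le
    linarith
  have hpi : (1 : ℝ) ≤ ‖(2 * Real.pi : ℂ)‖ := by
    rw [norm_mul, norm_real, Real.norm_of_nonneg Real.pi_pos.le]
    norm_num
    linarith [Real.pi_gt_three]
  have key : ∀ F : ℂ → ℂ, (∀ s : ℂ, 1 / 2 < s.re → DifferentiableAt ℂ F s) →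
      (∀ s : ℂ, 1 / 2 < s.re → F s ≠ 0) →
      (∀ s : ℂ, 1 / 2 < s.re → ‖F s‖ ≤ 3 * N * ‖s + 1‖ ^ 2) →
      (∀ s : ℂ, 2 ≤ s.re → 1 / 3 ≤ ‖F s‖) → ∀ z : ℂ,
      2 * Real.pi * z = -∫ t : ℝ, deriv F (2 + t * I) / F (2 + t * I) * mellin f (2 + t * I) *
        (x : ℂ) ^ (2 + t * I) →
      ‖z‖ ≤ C * Real.exp 1 * Real.sqrt x * Real.log x * (Real.log (3 * N) + 1) := by
    intro F h1 h2 h3 h4 z hz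
    have h := hC F (3 * N) x (1 / Real.log x) hK h1 h2 h3 h4 (by linarith) (by positivity)
      (by rw [div_le_one (by linarith)]; exact hlog1)
    rw [← norm_neg, ← hz, norm_mul, rpow_half_add_inv_log (by linarith)] at h
    refine (le_mul_of_one_le_left (norm_nonneg z) hpi).trans (h.trans_eq ?_)
    rw [div_div_eq_mul_div, div_one]
    ring
  split_ifs with h
  · subst h
    exact key _ (fun s _ => DirichletCharacter.differentiable_LFunctionTrivChar₁ N s)
      (fun s hs => LFunctionTrivChar₁_ne_zero_of_erh erh hs)
      (fun s hs => norm_LFunctionTrivChar₁_le_sq hs)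
      (fun s hs => one_third_le_norm_LFunctionTrivChar₁ hs) _
      (integral_logDeriv_LFunctionTrivChar₁ hf (by linarith))
  · rw [sub_zero]
    refine key _ (fun s _ => DirichletCharacter.differentiable_LFunction h s)
      (fun s hs => LFunction_ne_zero_of_erh erh χ hs (Or.inl h))
      (fun s hs => norm_LFunction_le_sq h hs)
      (fun s hs => one_third_le_norm_LFunction χ hs) _ ?_
    rw [hf.smoothPsi_eq_integral χ hx0, ← integral_neg]
    congr 1 with t
    ring

end smoothPsi

/-- A bump function supported in `[1/2, 1]`. -/
noncomputable def bump : ContDiffBump (3 / 4 : ℝ) where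
  rIn := 1 / 8
  rOut := 1 / 4
  rIn_pos := by norm_num
  rIn_lt_rOut := by norm_num

lemma bump_eq_zero {u : ℝ} (hu : u ∉ Icc (1 / 2 : ℝ) 1) : bump u = 0 := by
  refine bump.zero_of_le_dist ?_
  rw [Real.dist_eq]
  by_contra! h
  have h' : |u - 3 / 4| < 1 / 4 := h
  rw [abs_lt] at h'
  exact hu ⟨by linarith, by linarith⟩

lemma isWeight_bump : IsWeight fun u => (bump u : ℂ) :=
  ⟨ofRealCLM.contDiff.comp bump.contDiff, fun u hu => by simp [bump_eq_zero hu]⟩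

section residueClass

variable {N : ℕ}

lemma smoothPsi_bump (χ : DirichletCharacter ℂ N) {n : ℕ} (hn : 0 < n) :
    smoothPsi χ (fun u => (bump u : ℂ)) n =
      ∑ m ∈ Finset.Ioc 0 n, χ m * (Λ m * bump (m / n) : ℝ) := by
  rw [smoothPsi, tsum_eq_sum (s := Finset.Ioc 0 n)]
  · refine Finset.sum_congr rfl fun m _ => ?_
    push_cast
    ring
  · intro m hm
    have hn0 : (0 : ℝ) < n := by exact_mod_cast hn
    rw [bump_eq_zero, ofReal_zero, mul_zero]
    rintro ⟨h1, h2⟩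
    rw [div_le_one hn0] at h2
    refine hm (Finset.mem_Ioc.2 ⟨Nat.pos_of_ne_zero ?_, by exact_mod_cast h2⟩)
    rintro rfl
    norm_num at h1

lemma sum_char_mul_smoothPsi_bump [NeZero N] {a : ZMod N} (ha : IsUnit a) {n : ℕ} (hn : 0 < n) :
    ∑ χ : DirichletCharacter ℂ N, χ a⁻¹ * smoothPsi χ (fun u => (bump u : ℂ)) n =
      ((N.totient * ∑ m ∈ Finset.Ioc 0 n with ((m : ℕ) : ZMod N) = a,
        Λ m * bump (m / n) : ℝ) : ℂ) := by
  simp_rw [smoothPsi_bump _ hn, Finset.mul_sum]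
  rw [Finset.sum_comm, Finset.sum_filter, ofReal_sum]
  refine Finset.sum_congr rfl fun m _ => ?_
  simp_rw [← mul_assoc]
  rw [← Finset.sum_mul, DirichletCharacter.sum_char_inv_mul_char_eq ℂ ha]
  by_cases h : (m : ZMod N) = a
  · simp [h, mul_assoc]
  · simp [h, Ne.symm h]

lemma exists_sum_residueClass_ge (erh : ExtendedRiemannHypothesis) :
    ∃ C : ℝ, 0 ≤ C ∧ ∀ (N : ℕ) [NeZero N] (a : ZMod N) (n : ℕ), IsUnit a → 3 ≤ n →
      (n : ℝ) * ∫ u, bump u ≤ N * ((∑ m ∈ Finset.Ioc 0 n with ((m : ℕ) : ZMod N) = a,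
        Λ m * bump (m / n)) + C * Real.sqrt n * Real.log n * (Real.log (3 * N) + 1)) := by
  obtain ⟨C, hC0, hC⟩ := isWeight_bump.exists_norm_smoothPsi_sub_le erh
  refine ⟨C, hC0, fun N _ a n ha hn => ?_⟩
  have hn3 : (3 : ℝ) ≤ n := by exact_mod_cast hn
  have hN1 : (1 : ℝ) ≤ N := by exact_mod_cast NeZero.one_le
  set S : ℝ := ∑ m ∈ Finset.Ioc 0 n with ((m : ℕ) : ZMod N) = a, Λ m * bump (m / n) with hS
  set E : ℝ := C * Real.sqrt n * Real.log n * (Real.log (3 * N) + 1) with hE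
  have hS0 : 0 ≤ S := Finset.sum_nonneg fun m _ =>
    mul_nonneg ArithmeticFunction.vonMangoldt_nonneg bump.nonneg
  have hE0 : 0 ≤ E := by
    have := Real.log_nonneg (x := n) (by linarith)
    have := Real.log_nonneg (x := 3 * N) (by linarith)
    positivity
  have hmain : ∑ χ : DirichletCharacter ℂ N, χ a⁻¹ * (smoothPsi χ (fun u => (bump u : ℂ)) n -
      if χ = 1 then ((n : ℝ) : ℂ) * ∫ u, (bump u : ℂ) else 0) =
        ((N.totient * S - n * ∫ u, bump u : ℝ) : ℂ) := by
    simp_rw [mul_sub]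
    rw [Finset.sum_sub_distrib, sum_char_mul_smoothPsi_bump ha (by lia)]
    have hinv : IsUnit a⁻¹ := by
      obtain ⟨u, rfl⟩ := ha
      rw [ZMod.inv_coe_unit]
      exact u⁻¹.isUnit
    simp only [mul_ite, mul_zero, Finset.sum_ite_eq', Finset.mem_univ, if_true,
      MulChar.one_apply hinv, one_mul]
    rw [integral_complex_ofReal, ← hS]
    push_cast
    rfl
  have hnorm : ‖((N.totient * S - n * ∫ u, bump u : ℝ) : ℂ)‖ ≤ N.totient * E := by
    rw [← hmain]
    refine (norm_sum_le _ _).trans ((Finset.sum_le_sum (g := fun _ => E) fun χ _ => ?_).trans ?_)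
    · rw [norm_mul]
      refine (mul_le_of_le_one_left (norm_nonneg _) (χ.norm_le_one _)).trans ?_
      exact hC N χ n hn3
    · rw [Finset.sum_const, nsmul_eq_mul, Finset.card_univ, ← Nat.card_eq_fintype_card,
        DirichletCharacter.card_eq_totient_of_hasEnoughRootsOfUnity]
  rw [norm_real, Real.norm_eq_abs, abs_le] at hnorm
  have hle : (N.totient : ℝ) ≤ N := by exact_mod_cast N.totient_le
  nlinarith [hnorm.1, mul_le_mul_of_nonneg_right hle (add_nonneg hS0 hE0)]

lemma sum_residueClass_le_of_forall_not_prime {a : ZMod N} {n : ℕ} (hn : 0 < n)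
    (h : ∀ p : ℕ, p.Prime → (p : ZMod N) = a → (n : ℝ) / 2 ≤ p → ¬p ≤ n) :
    ∑ m ∈ Finset.Ioc 0 n with ((m : ℕ) : ZMod N) = a, Λ m * bump (m / n) ≤
      Chebyshev.psi n - Chebyshev.theta n := by
  have hn0 : (0 : ℝ) < n := by exact_mod_cast hn
  rw [Chebyshev.psi_sub_theta_eq_sum_not_prime, Nat.floor_natCast, Finset.sum_filter,
    Finset.sum_filter]
  refine Finset.sum_le_sum fun m hm => ?_
  have hΛ := ArithmeticFunction.vonMangoldt_nonneg (n := m)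
  by_cases ha : (m : ZMod N) = a
  · rw [if_pos ha]
    by_cases hp : m.Prime
    · rw [bump_eq_zero, mul_zero, if_neg (not_not.2 hp)]
      intro hu
      have h1 := hu.1
      rw [le_div_iff₀ hn0] at h1
      exact h m hp ha (by linarith) (Finset.mem_Ioc.1 hm).2
    · rw [if_pos hp]
      exact mul_le_of_le_one_right hΛ bump.le_one
  · rw [if_neg ha]
    split_ifs <;> simp [hΛ]

end residueClass

end DirichletBertrand

open DirichletBertrand in
/-- Bertrand's postulate for Dirichlet primes under ERH: if `D_n (log n)^2 / √n → 0`
and `gcd(a_n, D_n) = 1`, then for all sufficiently large `n` there is a prime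
`p ≡ a_n (mod D_n)` with `n/2 ≤ p ≤ n`. -/
theorem dirichlet_bertrand_of_ERH (erh : ExtendedRiemannHypothesis)
    (D a : ℕ → ℕ) (hD : ∀ n, 1 ≤ D n) (hcop : ∀ n, Nat.Coprime (a n) (D n))
    (hlim : Filter.Tendsto (fun n : ℕ => (D n : ℝ) * (Real.log n) ^ 2 / Real.sqrt n)
      Filter.atTop (nhds 0)) :
    ∀ᶠ n : ℕ in Filter.atTop, ∃ p : ℕ, p.Prime ∧ p % D n = a n % D n ∧
      (n : ℝ) / 2 ≤ (p : ℝ) ∧ p ≤ n := by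
  obtain ⟨C, hC0, hC⟩ := exists_sum_residueClass_ge erh
  obtain ⟨B, hB⟩ := Chebyshev.psi_sub_theta_le_mul_sqrt
  have hI : 0 < ∫ u, bump u := bump.integral_pos
  have hM : 0 < |B| + 2 * C + 1 := by positivity
  have hsmall := hlim.eventually_lt_const (div_pos hI hM)
  filter_upwards [hsmall, hlim.eventually_lt_const zero_lt_one, Filter.eventually_ge_atTop 9] with
    n h1 h2 hn
  by_contra! hno
  have hDpos : 0 < D n := hD n
  have : NeZero (D n) := ⟨hDpos.ne'⟩
  have hn9 : (9 : ℝ) ≤ n := by exact_mod_cast hn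
  have hlog : 1 ≤ Real.log n := by
    rw [Real.le_log_iff_exp_le (by linarith)]
    linarith [Real.exp_one_lt_d9]
  have hsq : Real.sqrt n * Real.sqrt n = n := Real.mul_self_sqrt (by linarith)
  have hs3 : 3 ≤ Real.sqrt n := Real.le_sqrt_of_sq_le (by linarith)
  rw [div_lt_iff₀ (by linarith), one_mul] at h2
  rw [div_lt_div_iff₀ (by linarith) hM] at h1
  have hD1 : (1 : ℝ) ≤ D n := by exact_mod_cast hDpos
  have hlog3 : Real.log (3 * D n) ≤ Real.log n := by
    refine Real.log_le_log (by linarith) ?_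
    nlinarith [one_le_pow₀ hlog (n := 2)]
  have key := hC (D n) (a n) n ((ZMod.isUnit_iff_coprime _ _).2 (hcop n)) (by lia)
  have hS := sum_residueClass_le_of_forall_not_prime (N := D n) (a := (a n : ZMod (D n)))
    (n := n) (by lia) fun p hp hpa hpn hle => absurd (hno p hp
      ((ZMod.natCast_eq_natCast_iff _ _ _).1 hpa) hpn) (not_lt.2 hle)
  have hS' : _ ≤ |B| * Real.sqrt n := hS.trans ((hB n).trans (by gcongr; exact le_abs_self B))
  have hE : C * Real.sqrt n * Real.log n * (Real.log (3 * D n) + 1) ≤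
      2 * C * Real.sqrt n * Real.log n ^ 2 := by
    have : C * Real.sqrt n * Real.log n * (Real.log (3 * D n) + 1) ≤
      C * Real.sqrt n * Real.log n * (2 * Real.log n) := by
        gcongr
        linarith
    linarith
  have hBlog : |B| * Real.sqrt n ≤ |B| * Real.sqrt n * Real.log n ^ 2 :=
    le_mul_of_one_le_right (by positivity) (one_le_pow₀ hlog)
  have hfin : (n : ℝ) * ∫ u, bump u ≤
      D n * (|B| * Real.sqrt n * Real.log n ^ 2 + 2 * C * Real.sqrt n * Real.log n ^ 2) := by
    refine key.trans ?_
    gcongr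
    exact hS'.trans hBlog
  have hDl : 0 ≤ (D n : ℝ) * Real.log n ^ 2 := by positivity
  have hfin' : Real.sqrt n * (Real.sqrt n * ∫ u, bump u) ≤
      Real.sqrt n * (D n * Real.log n ^ 2 * (|B| + 2 * C)) := by
    rw [← mul_assoc, hsq]
    linarith
  have := le_of_mul_le_mul_left hfin' (by linarith)
  linarith
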